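/- arXiv:2211.03389 — 6 statements merged into one kernel-verified Lean document; each statement's English description precedes it below -/
import Mathlib

section
/- Let n ≥ 1, let V : ℝⁿ → ℝ be bounded, continuous and satisfy V(x) > 0 for all x, and let u : [0,∞) × ℝⁿ → ℝ be a smooth solution of ∂ₜ²u − Δₓu + V·u = 0 with u(0,·) = u₀ ∈ Cc^∞(ℝⁿ), ∂ₜu(0,·) = u₁ ∈ Cc^∞(ℝⁿ), such that for every T > 0 there is R > 0 with u(t,·) supported in the ball of radius R for all t ∈ [0,T]. Assume ∫_{ℝⁿ} |u₁(x)|²/V(x) dx < ∞ and define v(t,x) := ∫₀ᵗ u(s,x) ds. Then for all t ≥ 0: ½‖u(t,·)‖² + ½‖∇ₓv(t,·)‖² + ¼∫_{ℝⁿ} V(x)|v(t,x)|² dx ≤ ½‖u₀‖² + ∫_{ℝⁿ} |u₁(x)|²/V(x) dx. -/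
open MeasureTheory

noncomputable section

/-- The Laplacian of `f : ℝⁿ → ℝ`, as the sum of second derivatives in the
coordinate directions. -/
def lap {n : ℕ} (f : EuclideanSpace ℝ (Fin n) → ℝ) (x : EuclideanSpace ℝ (Fin n)) : ℝ :=
  ∑ i : Fin n, iteratedFDeriv ℝ 2 f x ![EuclideanSpace.single i 1, EuclideanSpace.single i 1]

open Set Filter Topology

abbrev EE (n : ℕ) := EuclideanSpace ℝ (Fin n)

def eb {n : ℕ} (i : Fin n) : EE n := EuclideanSpace.single i 1

def Dx {n : ℕ} (i : Fin n) (F : ℝ × EE n → ℝ) (p : ℝ × EE n) : ℝ :=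
  fderiv ℝ F p (0, eb i)

def Dt {n : ℕ} (F : ℝ × EE n → ℝ) (p : ℝ × EE n) : ℝ :=
  fderiv ℝ F p (1, 0)

def Pr {n : ℕ} (F : ℝ × EE n → ℝ) (p : ℝ × EE n) : ℝ :=
  ∫ s in (0:ℝ)..p.1, F (s, p.2)

def Zr {n : ℕ} (T R : ℝ) (F : ℝ × EE n → ℝ) : Prop :=
  ∀ t ∈ Icc (0:ℝ) T, ∀ x, R < ‖x‖ → F (t, x) = 0

section
variable {n : ℕ} {F : ℝ × EE n → ℝ}

lemma Dx_smooth (hF : ContDiff ℝ (⊤ : ℕ∞) F) (i : Fin n) : ContDiff ℝ (⊤ : ℕ∞) (Dx i F) := by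
  unfold Dx
  exact (hF.fderiv_right (m := (⊤ : ℕ∞)) (by simp)).clm_apply contDiff_const

lemma Dt_smooth (hF : ContDiff ℝ (⊤ : ℕ∞) F) : ContDiff ℝ (⊤ : ℕ∞) (Dt F) := by
  unfold Dt
  exact (hF.fderiv_right (m := (⊤ : ℕ∞)) (by simp)).clm_apply contDiff_const

lemma hasFDerivAt_x (hF : ContDiff ℝ (⊤ : ℕ∞) F) (t : ℝ) (x : EE n) :
    HasFDerivAt (fun y => F (t, y)) ((fderiv ℝ F (t, x)).comp (ContinuousLinearMap.inr ℝ ℝ (EE n))) x :=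
  HasFDerivAt.comp x (f := fun y => (t, y))
    ((hF.differentiable (by simp)) (t, x)).hasFDerivAt (hasFDerivAt_prodMk_right t x)

lemma fderiv_x (hF : ContDiff ℝ (⊤ : ℕ∞) F) (t : ℝ) (x : EE n) (i : Fin n) :
    fderiv ℝ (fun y => F (t, y)) x (eb i) = Dx i F (t, x) := by
  rw [(hasFDerivAt_x hF t x).fderiv]; simp [Dx]

lemma hasDerivAt_t (hF : ContDiff ℝ (⊤ : ℕ∞) F) (t : ℝ) (x : EE n) :
    HasDerivAt (fun s => F (s, x)) (Dt F (t, x)) t := by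
  have := HasFDerivAt.comp_hasDerivAt (f := fun s => (s, x)) t
    ((hF.differentiable (by simp)) (t, x)).hasFDerivAt
    ((hasDerivAt_id t).prodMk (hasDerivAt_const t x))
  exact this

lemma Pr_cont (hF : Continuous F) : Continuous (Pr F) := by
  unfold Pr
  exact intervalIntegral.continuous_parametric_intervalIntegral_of_continuous
    (f := fun (p : ℝ × EE n) s => F (s, p.2)) (by fun_prop) continuous_fst

lemma Pr_t (hF : Continuous F) (t : ℝ) (x : EE n) :
    HasDerivAt (fun s => Pr F (s, x)) (F (t, x)) t := by
  have hc : Continuous fun s => F (s, x) := by fun_prop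
  exact intervalIntegral.integral_hasDerivAt_right (hc.intervalIntegrable _ _)
    (hc.stronglyMeasurableAtFilter _ _) hc.continuousAt

lemma Pr_x (hF : ContDiff ℝ (⊤ : ℕ∞) F) (t : ℝ) (x : EE n) :
    HasFDerivAt (fun y => Pr F (t, y))
      (∫ s in (0:ℝ)..t, (fderiv ℝ F (s, x)).comp (ContinuousLinearMap.inr ℝ ℝ (EE n))) x := by
  have hc := hF.continuous
  have hd : Continuous fun p => (fderiv ℝ F p).comp (ContinuousLinearMap.inr ℝ ℝ (EE n)) := 
    (hF.continuous_fderiv (by simp)).clm_comp continuous_const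
  obtain ⟨C, hC⟩ := ((isCompact_uIcc (a := (0:ℝ)) (b := t)).prod
    (isCompact_closedBall x 1)).exists_bound_of_continuousOn hd.continuousOn
  refine intervalIntegral.hasFDerivAt_integral_of_dominated_of_fderiv_le
    (F := fun y s => F (s, y)) (F' := fun y s =>
      (fderiv ℝ F (s, y)).comp (ContinuousLinearMap.inr ℝ ℝ (EE n))) (bound := fun _ => C)
    (Metric.closedBall_mem_nhds x one_pos) ?_ ?_ ?_ ?_ ?_ ?_
  · exact Eventually.of_forall fun y => 
      (show Continuous fun s => F (s, y) by fun_prop).aestronglyMeasurable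
  · exact (show Continuous fun s => F (s, x) by fun_prop).intervalIntegrable _ _
  · exact (hd.comp (show Continuous fun s : ℝ => (s, x) by fun_prop)).aestronglyMeasurable
  · exact Eventually.of_forall fun s hs y hy => hC (s, y) ⟨uIoc_subset_uIcc hs, hy⟩
  · simp
  · exact Eventually.of_forall fun s hs y hy => hasFDerivAt_x hF s y

lemma fderiv_Pr (hF : ContDiff ℝ (⊤ : ℕ∞) F) (t : ℝ) (x : EE n) (i : Fin n) :
    fderiv ℝ (fun y => Pr F (t, y)) x (eb i) = Pr (Dx i F) (t, x) := by
  have hd : Continuous fun p => (fderiv ℝ F p).comp (ContinuousLinearMap.inr ℝ ℝ (EE n)) := 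
    (hF.continuous_fderiv (by simp)).clm_comp continuous_const
  rw [(Pr_x hF t x).fderiv, ContinuousLinearMap.intervalIntegral_apply]
  · simp [Pr, Dx]
  · exact (hd.comp (show Continuous fun s : ℝ => (s, x) by fun_prop)).intervalIntegrable _ _

lemma lap_eq (hF : ContDiff ℝ (⊤ : ℕ∞) F) (t : ℝ) (x : EE n) :
    lap (fun y => F (t, y)) x = ∑ i, Dx i (Dx i F) (t, x) := by
  unfold lap
  refine Finset.sum_congr rfl fun i _ => ?_
  rw [iteratedFDeriv_two_apply]
  simp only [Matrix.cons_val_zero, Matrix.cons_val_one]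
  rw [← fderiv_x (Dx_smooth hF i)]
  have : (fun y => Dx i F (t, y)) = fun y => fderiv ℝ (fun y => F (t, y)) y (eb i) := by
    ext y; rw [fderiv_x hF]
  rw [this, fderiv_clm_apply]
  · simp [eb]
  · have h : ContDiff ℝ (⊤ : ℕ∞) (fun y => F (t, y)) := hF.comp (by fun_prop)
    exact ((h.fderiv_right (m := (⊤ : ℕ∞)) (by simp)).differentiable (by simp)) x
  · fun_prop

lemma Zr_Dx (hF : ContDiff ℝ (⊤ : ℕ∞) F) {T R : ℝ} (h : Zr T R F) (i : Fin n) : Zr T R (Dx i F) := by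
  intro t ht x hx
  rw [← fderiv_x hF]
  have : (fun y => F (t, y)) =ᶠ[𝓝 x] fun _ => 0 := by
    filter_upwards [(isOpen_lt continuous_const continuous_norm).mem_nhds hx] with y hy
    exact h t ht y hy
  rw [this.fderiv_eq]; simp

lemma Zr_Pr {T R : ℝ} (h : Zr T R F) : Zr T R (Pr F) := by
  intro t ht x hx
  simp only [Pr]
  rw [intervalIntegral.integral_congr (g := fun _ => 0)]
  · simp
  · intro s hs
    rw [uIcc_of_le ht.1] at hs
    exact h s ⟨hs.1, hs.2.trans ht.2⟩ x hx

lemma int_of {f : EE n → ℝ} (hf : Continuous f) {R : ℝ} (h : ∀ x, R < ‖x‖ → f x = 0) :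
    Integrable f := by
  refine hf.integrable_of_hasCompactSupport
    (HasCompactSupport.intro (isCompact_closedBall 0 R) fun x hx => h x ?_)
  simpa using hx

lemma fub {G : ℝ × EE n → ℝ} (hG : Continuous G) {T R : ℝ} (hT : 0 ≤ T) (h : Zr T R G)
    (h0 : ∀ s ∈ Icc (0:ℝ) T, ∫ x, G (s, x) = 0) :
    ∫ x, Pr G (T, x) = 0 := by
  simp only [Pr]
  rw [← intervalIntegral_integral_swap (f := fun s x => G (s, x))]
  · rw [intervalIntegral.integral_congr (g := fun _ => 0)]
    · simp
    · intro s hs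
      rw [uIcc_of_le hT] at hs
      exact h0 s hs
  · rw [uIoc_of_le hT]
    have h1 : IntegrableOn G (Icc (0:ℝ) T ×ˢ Metric.closedBall (0 : EE n) R) (volume.prod volume) :=
      hG.continuousOn.integrableOn_compact (isCompact_Icc.prod (isCompact_closedBall 0 R))
    have h2 : IntegrableOn G (Ioc (0:ℝ) T ×ˢ (univ : Set (EE n))) (volume.prod volume) := by
      refine (h1.of_forall_sdiff_eq_zero (t := Icc (0:ℝ) T ×ˢ (univ : Set (EE n)))
        (by measurability) ?_).mono_set (by gcongr; exact Ioc_subset_Icc_self)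
      rintro ⟨s, x⟩ ⟨⟨hs, -⟩, hx⟩
      refine h s hs x ?_
      by_contra hh
      exact hx ⟨hs, by simpa using hh⟩
    rw [IntegrableOn, ← Measure.prod_restrict, Measure.restrict_univ] at h2
    exact h2

lemma grad_sq (f : EE n → ℝ) (x : EE n) :
    ‖gradient f x‖ ^ 2 = ∑ i, (fderiv ℝ f x (eb i)) ^ 2 := by
  rw [EuclideanSpace.norm_sq_eq]
  refine Finset.sum_congr rfl fun i _ => ?_
  rw [← inner_gradient_left, eb, EuclideanSpace.inner_single_right]
  simp

end

theorem wave_potential_primitive_estimate (n : ℕ) (hn : 1 ≤ n)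
    (V : EuclideanSpace ℝ (Fin n) → ℝ)
    (hVcont : Continuous V) (hVbdd : ∃ M, ∀ x, |V x| ≤ M)
    (hVpos : ∀ x, 0 < V x)
    (u : ℝ → EuclideanSpace ℝ (Fin n) → ℝ)
    (u₀ u₁ : EuclideanSpace ℝ (Fin n) → ℝ)
    (hu : ContDiff ℝ (⊤ : ℕ∞) (fun p : ℝ × EuclideanSpace ℝ (Fin n) => u p.1 p.2))
    (hu₀smooth : ContDiff ℝ (⊤ : ℕ∞) u₀) (hu₀supp : HasCompactSupport u₀)
    (hu₁smooth : ContDiff ℝ (⊤ : ℕ∞) u₁) (hu₁supp : HasCompactSupport u₁)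
    (hPDE : ∀ t, 0 ≤ t → ∀ x,
      deriv (fun s => deriv (fun r => u r x) s) t - lap (u t) x + V x * u t x = 0)
    (hinit0 : ∀ x, u 0 x = u₀ x)
    (hinit1 : ∀ x, deriv (fun s => u s x) 0 = u₁ x)
    (hsupp : ∀ T, 0 < T → ∃ R, 0 < R ∧ ∀ t ∈ Set.Icc (0:ℝ) T, ∀ x,
      R ≤ ‖x‖ → u t x = 0)
    (hI : Integrable (fun x => (u₁ x) ^ 2 / V x))
    (v : ℝ → EuclideanSpace ℝ (Fin n) → ℝ)
    (hv : ∀ t x, v t x = ∫ s in (0:ℝ)..t, u s x) :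
    ∀ t, 0 ≤ t →
      (1/2) * (∫ x, (u t x) ^ 2)
        + (1/2) * (∫ x, ‖gradient (v t) x‖ ^ 2)
        + (1/4) * (∫ x, V x * (v t x) ^ 2)
      ≤ (1/2) * (∫ x, (u₀ x) ^ 2) + ∫ x, (u₁ x) ^ 2 / V x := by
  intro T hT
  set U : ℝ × EE n → ℝ := fun p => u p.1 p.2 with hU
  have hUc := hu.continuous
  have hDc := fun i => (Dx_smooth hu i).continuous
  have hDDc := fun i => (Dx_smooth (Dx_smooth hu i) i).continuous
  have hPc := Pr_cont hUc
  have hPDc := fun i => Pr_cont (hDc i)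
  have hPDDc := fun i => Pr_cont (hDDc i)
  have hvP : ∀ t, v t = fun x => Pr U (t, x) := fun t => funext fun x => hv t x
  obtain ⟨R, -, hR⟩ := hsupp (T + 1) (by linarith)
  have hZ : Zr T R U := fun t ht x hx => hR t ⟨ht.1, by linarith [ht.2]⟩ x hx.le
  have hZD := fun i => Zr_Dx hu hZ i
  have hZP := Zr_Pr hZ
  have hZPD := fun i => Zr_Pr (hZD i)
  have hd1 : ∀ s x, deriv (fun r => u r x) s = Dt U (s, x) := fun s x =>
    (hasDerivAt_t hu s x).deriv
  have hPr0 : ∀ (F : ℝ × EE n → ℝ) x, Pr F (0, x) = 0 := fun F x => by simp [Pr]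
  have hpde : ∀ t, 0 ≤ t → ∀ x,
      Dt (Dt U) (t, x) - ∑ i, Dx i (Dx i U) (t, x) + V x * U (t, x) = 0 := by
    intro t ht x
    have h := hPDE t ht x
    have h2 : lap (u t) x = _ := lap_eq hu t x
    rw [h2] at h
    simp only [hd1] at h
    rw [(hasDerivAt_t (Dt_smooth hu) t x).deriv] at h
    exact h
  have hint : ∀ t, 0 ≤ t → ∀ x,
      Dt U (t, x) - ∑ i, Pr (Dx i (Dx i U)) (t, x) + V x * Pr U (t, x) = u₁ x := by
    intro t ht x
    have hder : ∀ s ∈ uIcc 0 t, HasDerivAt (fun s => Dt U (s, x)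
        - ∑ i, Pr (Dx i (Dx i U)) (s, x) + V x * Pr U (s, x)) 0 s := by
      intro s hs
      rw [uIcc_of_le ht] at hs
      rw [← hpde s hs.1 x]
      exact ((hasDerivAt_t (Dt_smooth hu) s x).sub
        (HasDerivAt.fun_sum fun i _ => Pr_t (hDDc i) s x)).add ((Pr_t hUc s x).const_mul _)
    have h := intervalIntegral.integral_eq_sub_of_hasDerivAt hder (by simp)
    simp only [hPr0, ← hd1 0 x, hinit1] at h
    simp at h
    linarith
  set G : ℝ × EE n → ℝ := fun p =>
    ∑ i, (U p * Pr (Dx i (Dx i U)) p + Dx i U p * Pr (Dx i U) p) with hGdef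
  have hGc : Continuous G := by
    refine continuous_finsetSum _ fun i _ => ?_
    exact (hUc.mul (hPDDc i)).add ((hDc i).mul (hPDc i))
  have hZG : Zr T R G := by
    intro t ht x hx
    simp only [hGdef]
    refine Finset.sum_eq_zero fun i _ => ?_
    rw [hZ t ht x hx, hZD i t ht x hx]; simp
  have hG0 : ∀ s ∈ Icc (0:ℝ) T, ∫ x, G (s, x) = 0 := by
    intro s hs
    have cs : Continuous fun x : EE n => (s, x) := by fun_prop
    have i1 : ∀ i, Integrable fun x => U (s, x) * Pr (Dx i (Dx i U)) (s, x) := fun i =>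
      int_of (R := R) ((hUc.comp cs).mul ((hPDDc i).comp cs)) fun x hx => by rw [hZ s hs x hx]; simp
    have i2 : ∀ i, Integrable fun x => Dx i U (s, x) * Pr (Dx i U) (s, x) := fun i =>
      int_of (R := R) (((hDc i).comp cs).mul ((hPDc i).comp cs)) fun x hx => by
        rw [hZD i s hs x hx]; simp
    have i3 : ∀ i, Integrable fun x => U (s, x) * Pr (Dx i U) (s, x) := fun i =>
      int_of (R := R) ((hUc.comp cs).mul ((hPDc i).comp cs)) fun x hx => by rw [hZ s hs x hx]; simp
    simp only [hGdef]
    have i4 : ∀ i, Integrable fun x => U (s, x) * Pr (Dx i (Dx i U)) (s, x)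
        + Dx i U (s, x) * Pr (Dx i U) (s, x) := fun i => (i1 i).add (i2 i)
    rw [integral_finsetSum _ fun i _ => i4 i]
    refine Finset.sum_eq_zero fun i _ => ?_
    rw [integral_add (i1 i) (i2 i)]
    have := integral_mul_fderiv_eq_neg_fderiv_mul_of_integrable (μ := (volume : Measure (EE n)))
      (f := fun x => U (s, x)) (g := fun x => Pr (Dx i U) (s, x)) (v := eb i)
      (by simpa only [fderiv_x hu] using i2 i)
      (by simpa only [fderiv_Pr (Dx_smooth hu i)] using i1 i) (i3 i)
      (fun x _ => (hasFDerivAt_x hu s x).differentiableAt)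
      (fun x _ => (Pr_x (Dx_smooth hu i) s x).differentiableAt)
    simp only [fderiv_x hu, fderiv_Pr (Dx_smooth hu i)] at this
    rw [this]; ring
  have hkey := fub hGc hT hZG hG0
  have hen : ∀ x, Pr G (T, x) = (1/2) * U (T, x) ^ 2 + (1/2) * ∑ i, Pr (Dx i U) (T, x) ^ 2
      + (1/2) * (V x * Pr U (T, x) ^ 2) - u₁ x * Pr U (T, x) - (1/2) * u₀ x ^ 2 := by
    intro x
    have hder : ∀ s ∈ uIcc 0 T, HasDerivAt (fun s => (1/2) * U (s, x) ^ 2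
        + (1/2) * ∑ i, Pr (Dx i U) (s, x) ^ 2
        + (1/2) * (V x * Pr U (s, x) ^ 2) - u₁ x * Pr U (s, x)) (G (s, x)) s := by
      intro s hs
      rw [uIcc_of_le hT] at hs
      have h := (((((hasDerivAt_t hu s x).pow 2).const_mul (1/2)).add
        ((HasDerivAt.fun_sum (u := Finset.univ)
          fun i _ => (Pr_t (hDc i) s x).pow 2).const_mul (1/2))).add
        ((((Pr_t hUc s x).pow 2).const_mul (V x)).const_mul (1/2))).sub
        ((Pr_t hUc s x).const_mul (u₁ x))
      refine h.congr_deriv ?_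
      simp only [hGdef]
      rw [← hint s hs.1 x, Finset.sum_add_distrib, ← Finset.mul_sum]
      have : ∑ i, ((2:ℕ):ℝ) * Pr (Dx i U) (s, x) ^ (2 - 1) * Dx i U (s, x)
          = 2 * ∑ i, Dx i U (s, x) * Pr (Dx i U) (s, x) := by
        rw [Finset.mul_sum]
        refine Finset.sum_congr rfl fun i _ => ?_
        push_cast; ring
      rw [this]
      push_cast
      ring
    have h := intervalIntegral.integral_eq_sub_of_hasDerivAt hder
      ((hGc.comp (show Continuous fun s : ℝ => (s, x) by fun_prop)).intervalIntegrable _ _)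
    simp only [hPr0] at h
    have h0 : U (0, x) = u₀ x := hinit0 x
    rw [h0] at h
    simp only [Pr] at h ⊢
    rw [h]; simp
  have cT : Continuous fun x : EE n => (T, x) := by fun_prop
  have hTT : T ∈ Icc (0:ℝ) T := ⟨hT, le_rfl⟩
  have j1 : Integrable fun x => u T x ^ 2 :=
    int_of (R := R) ((hUc.comp cT).pow 2) fun x hx => by
      have := hZ T hTT x hx
      simp only [hU] at this
      simp [hU, this]
  have hgr : ∀ x, ‖gradient (v T) x‖ ^ 2 = ∑ i, Pr (Dx i U) (T, x) ^ 2 := by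
    intro x
    rw [grad_sq, hvP]
    simp only [fderiv_Pr hu]
  have j2 : Integrable fun x => ‖gradient (v T) x‖ ^ 2 := by
    simp only [hgr]
    refine int_of (R := R) (continuous_finsetSum _ fun i _ => ((hPDc i).comp cT).pow 2)
      fun x hx => Finset.sum_eq_zero fun i _ => by
        have := hZPD i T hTT x hx
        simp [this]
  have j3 : Integrable fun x => V x * v T x ^ 2 := by
    rw [hvP]
    refine int_of (R := R) (hVcont.mul ((hPc.comp cT).pow 2)) fun x hx => by
      have := hZP T hTT x hx
      simp [this]
  have j4 : Integrable fun x => u₀ x ^ 2 := by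
    refine int_of (R := R) (hu₀smooth.continuous.pow 2) fun x hx => by
      have : U (0, x) = 0 := hZ 0 ⟨le_rfl, hT⟩ x hx
      rw [← hinit0]
      simp only [hU] at this
      simp [this]
  have j5 : Integrable fun x => Pr G (T, x) :=
    int_of (R := R) ((Pr_cont hGc).comp cT) fun x hx => Zr_Pr hZG T hTT x hx
  have hpt : ∀ x, (1/2) * u T x ^ 2 + (1/2) * ‖gradient (v T) x‖ ^ 2 + (1/4) * (V x * v T x ^ 2)
      ≤ (1/2) * u₀ x ^ 2 + u₁ x ^ 2 / V x + Pr G (T, x) := by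
    intro x
    rw [hen, hgr, hvP]
    have hx := hVpos x
    have : u₁ x ^ 2 / V x + (1/4) * (V x * Pr U (T, x) ^ 2) - u₁ x * Pr U (T, x)
        = (u₁ x - V x * Pr U (T, x) / 2) ^ 2 / V x := by
      field_simp
      ring
    have h2 : 0 ≤ (u₁ x - V x * Pr U (T, x) / 2) ^ 2 / V x := by positivity
    have h3 : U (T, x) = u T x := rfl
    rw [h3]
    linarith
  have k1 : Integrable fun x => (1/2) * u T x ^ 2 + (1/2) * ‖gradient (v T) x‖ ^ 2 :=
    (j1.const_mul (1/2)).add (j2.const_mul (1/2))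
  have k2 : Integrable fun x => (1/2) * u₀ x ^ 2 + u₁ x ^ 2 / V x :=
    (j4.const_mul (1/2)).add hI
  have hfin := integral_mono (k1.add (j3.const_mul (1/4))) (k2.add j5) hpt
  simp only [Pi.add_apply] at hfin
  rw [integral_add k1 (j3.const_mul (1/4)),
    integral_add (j1.const_mul (1/2)) (j2.const_mul (1/2)),
    integral_add k2 j5, integral_add (j4.const_mul (1/2)) hI, hkey] at hfin
  simp only [integral_const_mul] at hfin
  linarith
end
end

section
/- Let n ≥ 1, let V : ℝⁿ → ℝ be bounded, continuous and nonnegative, and let u : [0,∞) × ℝⁿ → ℝ be a smooth solution of ∂ₜ²u − Δₓu + V·u + ∂ₜu = 0 such that for every T > 0 there is R > 0 with u(t,·) supported in the ball of radius R for all t ∈ [0,T]. Then for all t ≥ 0 the identity (1+t)E(t) + ∫₀ᵗ (1+s)‖∂ₜu(s,·)‖² ds = E(0) + ∫₀ᵗ E(s) ds holds. -/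
open MeasureTheory

noncomputable section

/-- The total energy `E(t) = ½∫ (|∂ₜu|² + |∇ₓu|² + V|u|²) dx`. -/
def energy {n : ℕ} (V : EuclideanSpace ℝ (Fin n) → ℝ)
    (u : ℝ → EuclideanSpace ℝ (Fin n) → ℝ) (t : ℝ) : ℝ :=
  (1/2) * ∫ x, ((deriv (fun s => u s x) t) ^ 2 + ‖gradient (u t) x‖ ^ 2 + V x * (u t x) ^ 2)

section aux
variable {n : ℕ}

def dv (v : ℝ × EuclideanSpace ℝ (Fin n)) (G : ℝ × EuclideanSpace ℝ (Fin n) → ℝ) :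
    ℝ × EuclideanSpace ℝ (Fin n) → ℝ := fun p => fderiv ℝ G p v

theorem dv_smooth (v : ℝ × EuclideanSpace ℝ (Fin n)) {G : ℝ × EuclideanSpace ℝ (Fin n) → ℝ}
    (hG : ContDiff ℝ (⊤ : ℕ∞) G) : ContDiff ℝ (⊤ : ℕ∞) (dv v G) := by
  unfold dv
  exact (hG.fderiv_right (m := (⊤ : ℕ∞)) (by simp)).clm_apply contDiff_const

theorem dv_comm (v w : ℝ × EuclideanSpace ℝ (Fin n)) {G : ℝ × EuclideanSpace ℝ (Fin n) → ℝ}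
    (hG : ContDiff ℝ (⊤ : ℕ∞) G) (p) : dv v (dv w G) p = dv w (dv v G) p := by
  have hd : DifferentiableAt ℝ (fderiv ℝ G) p :=
    ((hG.fderiv_right (m := (⊤ : ℕ∞)) (by simp)).differentiable (by simp)) p
  have key : ∀ a b : ℝ × EuclideanSpace ℝ (Fin n),
      dv a (dv b G) p = fderiv ℝ (fderiv ℝ G) p a b := by
    intro a b
    unfold dv
    rw [fderiv_clm_apply hd (differentiableAt_const b)]
    simp
  rw [key, key]
  have := (hG.contDiffAt (x := p)).isSymmSndFDerivAt (by simp only [minSmoothness_of_isRCLikeNormedField]; exact WithTop.coe_le_coe.2 (le_top : (2 : ℕ∞) ≤ ⊤))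
  exact this v w

theorem dt_has {G : ℝ × EuclideanSpace ℝ (Fin n) → ℝ} (hG : ContDiff ℝ (⊤ : ℕ∞) G) (s x) :
    HasDerivAt (fun r : ℝ => G (r, x)) (dv (1, 0) G (s, x)) s := by
  have h1 := (hG.differentiable (by simp) (s, x)).hasFDerivAt
  exact h1.comp_hasDerivAt s ((hasDerivAt_id s).prodMk (hasDerivAt_const s x))

theorem dx_has {G : ℝ × EuclideanSpace ℝ (Fin n) → ℝ} (hG : ContDiff ℝ (⊤ : ℕ∞) G) (s x) :
    HasFDerivAt (fun y => G (s, y))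
      ((fderiv ℝ G (s, x)).comp (ContinuousLinearMap.inr ℝ ℝ (EuclideanSpace ℝ (Fin n)))) x := by
  have h1 := (hG.differentiable (by simp) (s, x)).hasFDerivAt
  exact h1.comp x (hasFDerivAt_prodMk_right s x)

theorem dx_eq {G : ℝ × EuclideanSpace ℝ (Fin n) → ℝ} (hG : ContDiff ℝ (⊤ : ℕ∞) G) (s x v) :
    fderiv ℝ (fun y => G (s, y)) x v = dv (0, v) G (s, x) := by
  rw [(dx_has hG s x).fderiv]; simp [dv]

theorem lap_eq_s14 {G : ℝ × EuclideanSpace ℝ (Fin n) → ℝ} (hG : ContDiff ℝ (⊤ : ℕ∞) G) (s x) :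
    lap (fun y => G (s, y)) x = ∑ i : Fin n, dv (0, EuclideanSpace.single i 1)
      (dv (0, EuclideanSpace.single i 1) G) (s, x) := by
  unfold lap
  refine Finset.sum_congr rfl fun i _ => ?_
  rw [iteratedFDeriv_two_apply]
  have hg : ContDiff ℝ (⊤ : ℕ∞) (fun y => G (s, y)) := hG.comp (by fun_prop)
  have hd : DifferentiableAt ℝ (fderiv ℝ (fun y => G (s, y))) x :=
    ((hg.fderiv_right (m := (⊤ : ℕ∞)) (by simp)).differentiable (by simp)) x
  rw [← dx_eq (dv_smooth _ hG)]
  simp_rw [← dx_eq hG]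
  rw [fderiv_clm_apply hd (differentiableAt_const _)]
  simp

theorem grad_eq {G : ℝ × EuclideanSpace ℝ (Fin n) → ℝ} (hG : ContDiff ℝ (⊤ : ℕ∞) G) (s x) :
    ‖gradient (fun y => G (s, y)) x‖ ^ 2 = ∑ i : Fin n,
      (dv (0, EuclideanSpace.single i 1) G (s, x)) ^ 2 := by
  rw [EuclideanSpace.norm_sq_eq]
  refine Finset.sum_congr rfl fun i _ => ?_
  rw [← dx_eq hG, Real.norm_eq_abs, sq_abs]
  congr 1
  have : inner ℝ (gradient (fun y => G (s, y)) x) (EuclideanSpace.single i (1:ℝ)) =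
      fderiv ℝ (fun y => G (s, y)) x (EuclideanSpace.single i 1) := by
    unfold gradient
    simp
  rw [← this, EuclideanSpace.inner_single_right]
  simp

theorem hasDeriv_setInt {K : Set (EuclideanSpace ℝ (Fin n))} (hK : IsCompact K)
    (e e' : ℝ × EuclideanSpace ℝ (Fin n) → ℝ) (he : Continuous e) (he' : Continuous e')
    (h : ∀ s x, HasDerivAt (fun r => e (r, x)) (e' (s, x)) s) (s : ℝ) :
    HasDerivAt (fun r => ∫ x in K, e (r, x)) (∫ x in K, e' (s, x)) s := by
  obtain ⟨C, hC⟩ := ((isCompact_closedBall s 1).prod hK).exists_bound_of_continuousOn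
    he'.continuousOn
  refine (hasDerivAt_integral_of_dominated_loc_of_deriv_le (μ := volume.restrict K)
    (F := fun r x => e (r, x)) (F' := fun r x => e' (r, x)) (bound := fun _ => C)
    (s := Metric.closedBall s 1) (Metric.closedBall_mem_nhds s one_pos) ?_ ?_ ?_ ?_ ?_ ?_).2
  · exact Filter.Eventually.of_forall fun r =>
      (by fun_prop : Continuous fun x => e (r, x)).aestronglyMeasurable
  · exact (by fun_prop : Continuous fun x => e (s, x)).continuousOn.integrableOn_compact hK
  · exact (by fun_prop : Continuous fun x => e' (s, x)).aestronglyMeasurable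
  · refine (ae_restrict_iff' hK.measurableSet).2 (Filter.Eventually.of_forall ?_)
    intro x hx r hr
    exact hC (r, x) ⟨hr, hx⟩
  · exact integrableOn_const hK.measure_lt_top.ne
  · exact Filter.Eventually.of_forall fun x r _ => h r x

theorem parts {f g : EuclideanSpace ℝ (Fin n) → ℝ} (hf : ContDiff ℝ (⊤ : ℕ∞) f)
    (hg : ContDiff ℝ (⊤ : ℕ∞) g) (hfs : HasCompactSupport f) (v) :
    ∫ x, (f x * fderiv ℝ g x v + fderiv ℝ f x v * g x) = 0 := by
  have hf' : Continuous fun x => fderiv ℝ f x v :=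
    ((hf.fderiv_right (m := (⊤ : ℕ∞)) (by simp)).continuous).clm_apply continuous_const
  have hg' : Continuous fun x => fderiv ℝ g x v :=
    ((hg.fderiv_right (m := (⊤ : ℕ∞)) (by simp)).continuous).clm_apply continuous_const
  have i1 : Integrable fun x => f x * fderiv ℝ g x v :=
    (hf.continuous.mul hg').integrable_of_hasCompactSupport hfs.mul_right
  have i2 : Integrable fun x => fderiv ℝ f x v * g x :=
    (hf'.mul hg.continuous).integrable_of_hasCompactSupport (hfs.fderiv_apply ℝ v).mul_right
  have i3 : Integrable fun x => f x * g x :=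
    (hf.continuous.mul hg.continuous).integrable_of_hasCompactSupport hfs.mul_right
  rw [integral_add i1 i2, integral_mul_fderiv_eq_neg_fderiv_mul_of_integrable i2 i1 i3
    (fun x _ => hf.differentiable (by simp) x) (fun x _ => hg.differentiable (by simp) x)]
  ring

theorem dx_vanish {G : ℝ × EuclideanSpace ℝ (Fin n) → ℝ} (hG : ContDiff ℝ (⊤ : ℕ∞) G) {s R : ℝ}
    (h : ∀ x, R ≤ ‖x‖ → G (s, x) = 0) (v x) (hx : R < ‖x‖) : dv (0, v) G (s, x) = 0 := by
  rw [← dx_eq hG]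
  have : (fun y => G (s, y)) =ᶠ[nhds x] fun _ => 0 := by
    filter_upwards [(isOpen_lt continuous_const continuous_norm).mem_nhds hx] with y hy
    exact h y (le_of_lt hy)
  rw [this.fderiv_eq]
  simp

theorem dt_vanish {G : ℝ × EuclideanSpace ℝ (Fin n) → ℝ} (hG : ContDiff ℝ (⊤ : ℕ∞) G) {T : ℝ}
    (hT : 0 < T) {x} (h : ∀ s ∈ Set.Icc 0 T, G (s, x) = 0) {s} (hs : s ∈ Set.Icc 0 T) :
    dv (1, 0) G (s, x) = 0 := by
  have h1 := (dt_has hG s x).hasDerivWithinAt (s := Set.Icc 0 T)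
  have h2 : HasDerivWithinAt (fun r : ℝ => G (r, x)) 0 (Set.Icc 0 T) s :=
    (hasDerivWithinAt_const s (Set.Icc 0 T) (0:ℝ)).congr h (h s hs)
  exact (uniqueDiffOn_Icc hT s hs).eq_deriv _ h1 h2

end aux

theorem damped_wave_weighted_energy_identity (n : ℕ) (hn : 1 ≤ n)
    (V : EuclideanSpace ℝ (Fin n) → ℝ)
    (hVcont : Continuous V) (hVbdd : ∃ M, ∀ x, |V x| ≤ M)
    (hVnonneg : ∀ x, 0 ≤ V x)
    (u : ℝ → EuclideanSpace ℝ (Fin n) → ℝ)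
    (hu : ContDiff ℝ (⊤ : ℕ∞) (fun p : ℝ × EuclideanSpace ℝ (Fin n) => u p.1 p.2))
    (hPDE : ∀ t, 0 ≤ t → ∀ x,
      deriv (fun s => deriv (fun r => u r x) s) t - lap (u t) x + V x * u t x
        + deriv (fun s => u s x) t = 0)
    (hsupp : ∀ T, 0 < T → ∃ R, 0 < R ∧ ∀ t ∈ Set.Icc (0:ℝ) T, ∀ x,
      R ≤ ‖x‖ → u t x = 0)
    :
    ∀ t, 0 ≤ t →
      (1 + t) * energy V u t
        + (∫ s in (0:ℝ)..t, (1 + s) * ∫ x, (deriv (fun r => u r x) s) ^ 2)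
      = energy V u 0 + ∫ s in (0:ℝ)..t, energy V u s := by
  intro t ht
  let F : ℝ × EuclideanSpace ℝ (Fin n) → ℝ := fun p => u p.1 p.2
  have hF : ContDiff ℝ (⊤ : ℕ∞) F := hu
  let d : Fin n → ℝ × EuclideanSpace ℝ (Fin n) := fun i => (0, EuclideanSpace.single i 1)
  let U := dv (1, 0) F
  have hU : ContDiff ℝ (⊤ : ℕ∞) U := dv_smooth _ hF
  have hD : ∀ i, ContDiff ℝ (⊤ : ℕ∞) (dv (d i) F) := fun i => dv_smooth _ hF
  have hut : ∀ s x, deriv (fun r => u r x) s = U (s, x) := fun s x => (dt_has hF s x).deriv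
  have hutt : ∀ s x, deriv (fun s => deriv (fun r => u r x) s) s = dv (1, 0) U (s, x) := by
    intro s x
    simp_rw [hut]
    exact (dt_has hU s x).deriv
  let e : ℝ × EuclideanSpace ℝ (Fin n) → ℝ := fun p =>
    U p ^ 2 + ∑ i, dv (d i) F p ^ 2 + V p.2 * F p ^ 2
  let e' : ℝ × EuclideanSpace ℝ (Fin n) → ℝ := fun p =>
    2 * U p * dv (1, 0) U p + ∑ i, 2 * dv (d i) F p * dv (1, 0) (dv (d i) F) p
      + V p.2 * (2 * F p * U p)
  have cF := hF.continuous
  have cU := hU.continuous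
  have cU' := (dv_smooth (1, 0) hU).continuous
  have cD := fun i => (hD i).continuous
  have cD' := fun i => (dv_smooth (1, 0) (hD i)).continuous
  have ce : Continuous e := by fun_prop
  have ce' : Continuous e' := by fun_prop
  have hee' : ∀ s x, HasDerivAt (fun r => e (r, x)) (e' (s, x)) s := by
    intro s x
    have h1 := (dt_has hU s x).pow 2
    have h2 := HasDerivAt.fun_sum (u := Finset.univ)
      (fun i _ => (dt_has (hD i) s x).pow 2)
    have h3 := ((dt_has hF s x).pow 2).const_mul (V x)
    have := (h1.add h2).add h3
    refine HasDerivAt.congr_deriv (f := fun r => e (r, x)) this ?_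
    simp [e', U]
  obtain ⟨R, hR, hvan⟩ := hsupp (t + 1) (by linarith)
  have vF : ∀ s ∈ Set.Icc 0 (t + 1), ∀ x, R ≤ ‖x‖ → F (s, x) = 0 := hvan
  have vU : ∀ s ∈ Set.Icc 0 (t + 1), ∀ x, R ≤ ‖x‖ → U (s, x) = 0 := fun s hs x hx =>
    dt_vanish hF (by linarith) (fun r hr => vF r hr x hx) hs
  have vD : ∀ s ∈ Set.Icc 0 (t + 1), ∀ x, R < ‖x‖ → ∀ i, dv (d i) F (s, x) = 0 :=
    fun s hs x hx i => dx_vanish hF (vF s hs) _ x hx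
  let K := Metric.closedBall (0 : EuclideanSpace ℝ (Fin n)) R
  have hK : IsCompact K := isCompact_closedBall _ _
  have outK : ∀ x, x ∉ K → R < ‖x‖ := by
    intro x hx
    simpa [K] using hx
  have hE : ∀ s ∈ Set.Icc 0 (t + 1), energy V u s = (1/2) * ∫ x in K, e (s, x) := by
    intro s hs
    unfold energy
    congr 1
    rw [setIntegral_eq_integral_of_forall_compl_eq_zero]
    · refine integral_congr_ae (Filter.Eventually.of_forall fun x => ?_)
      have := grad_eq hF s x
      simp only [hut, e, d]
      rw [← this]
    · intro x hx
      have hx := outK x hx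
      simp [e, vU s hs x hx.le, vF s hs x hx.le, vD s hs x hx]
  have hN : ∀ s ∈ Set.Icc 0 (t + 1), (∫ x, (deriv (fun r => u r x) s) ^ 2)
      = ∫ x in K, U (s, x) ^ 2 := by
    intro s hs
    rw [setIntegral_eq_integral_of_forall_compl_eq_zero]
    · simp_rw [hut]
    · intro x hx
      simp [vU s hs x (outK x hx).le]
  have hdE := hasDeriv_setInt hK e e' ce ce' hee'
  have hcE : Continuous fun s => ∫ x in K, e (s, x) :=
    continuous_iff_continuousAt.2 fun s => (hdE s).continuousAt
  have hcN : Continuous fun s => ∫ x in K, U (s, x) ^ 2 :=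
    continuous_iff_continuousAt.2 fun s => (hasDeriv_setInt hK (fun p => U p ^ 2)
      (fun p => 2 * U p * dv (1, 0) U p) (by fun_prop) (by fun_prop) (fun s x => by
        have := (dt_has hU s x).pow 2
        refine HasDerivAt.congr_deriv (f := fun r => U (r, x) ^ 2) this ?_
        simp [U]) s).continuousAt
  have hflux : ∀ s ∈ Set.Icc 0 (t + 1), ∀ i, ∫ x in K, (U (s, x) * dv (d i) (dv (d i) F) (s, x)
      + dv (d i) U (s, x) * dv (d i) F (s, x)) = 0 := by
    intro s hs i
    rw [setIntegral_eq_integral_of_forall_compl_eq_zero]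
    · have := parts (f := fun x => U (s, x)) (g := fun x => dv (d i) F (s, x))
        (hU.comp (by fun_prop)) ((hD i).comp (by fun_prop))
        (HasCompactSupport.intro hK fun x hx => vU s hs x (outK x hx).le)
        (EuclideanSpace.single i 1)
      simp_rw [dx_eq hU, dx_eq (hD i)] at this
      exact this
    · intro x hx
      simp [vU s hs x (outK x hx).le, vD s hs x (outK x hx)]
  have hdiss : ∀ s ∈ Set.Icc 0 (t + 1), ∫ x in K, e' (s, x) = -2 * ∫ x in K, U (s, x) ^ 2 := by
    intro s hs
    have hpt : ∀ x, e' (s, x) = -2 * U (s, x) ^ 2 +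
        2 * ∑ i, (U (s, x) * dv (d i) (dv (d i) F) (s, x)
          + dv (d i) U (s, x) * dv (d i) F (s, x)) := by
      intro x
      have hp := hPDE s hs.1 x
      have hl : lap (u s) x = ∑ i, dv (d i) (dv (d i) F) (s, x) := lap_eq_s14 hF s x
      rw [hutt, hut, hl] at hp
      have hp' : dv (1, 0) U (s, x) = ∑ i, dv (d i) (dv (d i) F) (s, x)
        - V x * F (s, x) - U (s, x) := by
        change _ - _ + V x * F (s, x) + _ = 0 at hp
        linarith
      have hc : ∀ i, dv (1, 0) (dv (d i) F) (s, x) = dv (d i) U (s, x) :=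
        fun i => dv_comm _ _ hF _
      simp only [e', hc, hp']
      rw [Finset.sum_add_distrib, ← Finset.mul_sum]
      have : ∑ i, 2 * dv (d i) F (s, x) * dv (d i) U (s, x)
        = 2 * ∑ i, dv (d i) U (s, x) * dv (d i) F (s, x) := by
        rw [Finset.mul_sum]
        exact Finset.sum_congr rfl fun i _ => by ring
      rw [this]
      ring
    have cDU := fun i => (dv_smooth (d i) hU).continuous
    have cDD := fun i => (dv_smooth (d i) (hD i)).continuous
    have hi : ∀ g : EuclideanSpace ℝ (Fin n) → ℝ, Continuous g → IntegrableOn g K :=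
      fun g hg => hg.continuousOn.integrableOn_compact hK
    simp_rw [hpt]
    rw [integral_add (hi _ (by fun_prop)) (hi _ (by fun_prop)), integral_const_mul,
      integral_const_mul, integral_finsetSum _ (fun i _ => hi _ (by fun_prop)),
      Finset.sum_eq_zero (fun i _ => hflux s hs i)]
    ring
  have hsub : Set.uIcc 0 t ⊆ Set.Icc 0 (t + 1) := by
    rw [Set.uIcc_of_le ht]
    exact Set.Icc_subset_Icc le_rfl (by linarith)
  have ftc := intervalIntegral.integral_eq_sub_of_hasDerivAt (a := 0) (b := t)
    (f := fun s => (1 + s) * ((1/2) * ∫ x in K, e (s, x)))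
    (f' := fun s => (1/2) * (∫ x in K, e (s, x)) - (1 + s) * ∫ x in K, U (s, x) ^ 2)
    (by
      intro s hs
      have h1 := ((hasDerivAt_id s).const_add 1).mul ((hdE s).const_mul (1/2))
      rw [hdiss s (hsub hs)] at h1
      refine HasDerivAt.congr_deriv (f := fun s => (1 + s) * ((1/2) * ∫ x in K, e (s, x))) h1 ?_
      simp only [id]
      ring) (Continuous.intervalIntegrable (by fun_prop) _ _)
  rw [intervalIntegral.integral_sub (Continuous.intervalIntegrable (by fun_prop) _ _)
    (Continuous.intervalIntegrable (by fun_prop) _ _)] at ftc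
  rw [hE t ⟨ht, by linarith⟩, hE 0 ⟨le_rfl, by linarith⟩,
    intervalIntegral.integral_congr (fun s hs => hE s (hsub hs)),
    intervalIntegral.integral_congr (g := fun s => (1 + s) * ∫ x in K, U (s, x) ^ 2)
      (fun s hs => by simp only [hN s (hsub hs)])]
  linarith
end
end

section
/- Let n ≥ 1, let V : ℝⁿ → ℝ be bounded, continuous and nonnegative, and let u : [0,∞) × ℝⁿ → ℝ be a smooth solution of ∂ₜ²u − Δₓu + V·u + ∂ₜu = 0 with u(0,·) = u₀ ∈ Cc^∞(ℝⁿ), ∂ₜu(0,·) = u₁ ∈ Cc^∞(ℝⁿ), such that for every T > 0 there is R > 0 with u(t,·) supported in the ball of radius R for all t ∈ [0,T]. Then for all t ≥ 0: ∫₀ᵗ (1+s)(‖∇ₓu(s,·)‖² + ∫_{ℝⁿ} V(x)|u(s,x)|² dx) ds + ((1+t)/4)‖u(t,·)‖² ≤ 3E(0) + 3∫₀ᵗ E(s) ds + (u₁,u₀) + ½‖u(t,·)‖² + ∫₀ᵗ ‖u(s,·)‖² ds, and moreover ∫₀ᵗ (1+s)‖∂ₜu(s,·)‖² ds ≤ E(0)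 + ∫₀ᵗ E(s) ds. -/
open MeasureTheory

noncomputable section

/-- Directional derivative. -/
def DD {P : Type*} [NormedAddCommGroup P] [NormedSpace ℝ P] (w : P → ℝ) (v : P) (p : P) : ℝ :=
  fderiv ℝ w p v

theorem DD_smooth {P : Type*} [NormedAddCommGroup P] [NormedSpace ℝ P] {w : P → ℝ}
    (hw : ContDiff ℝ (⊤ : ℕ∞) w) (v : P) : ContDiff ℝ (⊤ : ℕ∞) (DD w v) := by
  unfold DD
  exact (hw.fderiv_right (m := (⊤ : ℕ∞)) (by norm_cast)).clm_apply contDiff_const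

theorem DD_symm {P : Type*} [NormedAddCommGroup P] [NormedSpace ℝ P] {w : P → ℝ}
    (hw : ContDiff ℝ (⊤ : ℕ∞) w) (v v' p : P) : DD (DD w v) v' p = DD (DD w v') v p := by
  have h1 : DifferentiableAt ℝ (fderiv ℝ w) p :=
    ((hw.fderiv_right (m := (⊤ : ℕ∞)) (by norm_cast)).differentiable (by simp)) p
  have h2 : IsSymmSndFDerivAt ℝ w p :=
    hw.contDiffAt.isSymmSndFDerivAt (by
      rw [minSmoothness_of_isRCLikeNormedField]
      exact WithTop.coe_le_coe.2 (le_top : (2 : ℕ∞) ≤ ⊤))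
  have key : ∀ a b : P, DD (DD w a) b p = fderiv ℝ (fderiv ℝ w) p b a := by
    intro a b
    unfold DD
    rw [fderiv_clm_apply h1 (differentiableAt_const a)]
    simp
  rw [key, key]
  exact h2.eq _ _

theorem hasDerivAt_slice {n : ℕ} {w : ℝ × EuclideanSpace ℝ (Fin n) → ℝ}
    (hw : ContDiff ℝ (⊤ : ℕ∞) w) (s : ℝ) (x : EuclideanSpace ℝ (Fin n)) :
    HasDerivAt (fun r => w (r, x)) (DD w (1, 0) (s, x)) s := by
  have h := ((hw.differentiable (by simp)) (s, x)).hasFDerivAt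
  exact h.comp_hasDerivAt s ((hasDerivAt_id s).prodMk (hasDerivAt_const s x))

theorem hasFDerivAt_slice {n : ℕ} {w : ℝ × EuclideanSpace ℝ (Fin n) → ℝ}
    (hw : ContDiff ℝ (⊤ : ℕ∞) w) (s : ℝ) (x : EuclideanSpace ℝ (Fin n)) :
    HasFDerivAt (fun y => w (s, y))
      ((fderiv ℝ w (s, x)).comp (ContinuousLinearMap.inr ℝ ℝ (EuclideanSpace ℝ (Fin n)))) x := by
  have h := ((hw.differentiable (by simp)) (s, x)).hasFDerivAt
  exact h.comp x (hasFDerivAt_prodMk_right s x)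

theorem fderiv_slice {n : ℕ} {w : ℝ × EuclideanSpace ℝ (Fin n) → ℝ}
    (hw : ContDiff ℝ (⊤ : ℕ∞) w) (s : ℝ) (x v : EuclideanSpace ℝ (Fin n)) :
    fderiv ℝ (fun y => w (s, y)) x v = DD w (0, v) (s, x) := by
  rw [(hasFDerivAt_slice hw s x).fderiv]
  simp [DD]

/-- The function vanishes for times in `[0,T]` and outside the ball of radius `R`. -/
def Van {n : ℕ} (T R : ℝ) (f : ℝ × EuclideanSpace ℝ (Fin n) → ℝ) : Prop :=
  ∀ p ∈ Set.Icc (0:ℝ) T ×ˢ {x : EuclideanSpace ℝ (Fin n) | R < ‖x‖}, f p = 0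

theorem Van.DD {n : ℕ} {T R : ℝ} (hT : 0 < T) {f : ℝ × EuclideanSpace ℝ (Fin n) → ℝ}
    (hf : ContDiff ℝ (⊤ : ℕ∞) f) (h : Van T R f) (v : ℝ × EuclideanSpace ℝ (Fin n)) :
    Van T R (DD f v) := by
  intro p hp
  have hU : UniqueDiffOn ℝ (Set.Icc (0:ℝ) T ×ˢ {x : EuclideanSpace ℝ (Fin n) | R < ‖x‖}) :=
    (uniqueDiffOn_Icc hT).prod (isOpen_lt continuous_const continuous_norm).uniqueDiffOn
  have h1 := ((hf.differentiable (by simp)) p).hasFDerivAt.hasFDerivWithinAt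
    (s := Set.Icc (0:ℝ) T ×ˢ {x : EuclideanSpace ℝ (Fin n) | R < ‖x‖})
  have h2 : HasFDerivWithinAt f (0 : ℝ × EuclideanSpace ℝ (Fin n) →L[ℝ] ℝ)
      (Set.Icc (0:ℝ) T ×ˢ {x : EuclideanSpace ℝ (Fin n) | R < ‖x‖}) p :=
    (hasFDerivWithinAt_const (0:ℝ) p _).congr (fun q hq => h q hq) (h p hp)
  have := (hU p hp).eq h1 h2
  simp [_root_.DD, this]

/-- Integral over the closed ball at a given time. -/
def J {n : ℕ} (R : ℝ) (f : ℝ × EuclideanSpace ℝ (Fin n) → ℝ) (s : ℝ) : ℝ :=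
  ∫ x in Metric.closedBall (0 : EuclideanSpace ℝ (Fin n)) R, f (s, x)

theorem intOn {n : ℕ} (R : ℝ) {f : ℝ × EuclideanSpace ℝ (Fin n) → ℝ} (hf : Continuous f)
    (s : ℝ) : IntegrableOn (fun x => f (s, x))
      (Metric.closedBall (0 : EuclideanSpace ℝ (Fin n)) R) :=
  (hf.comp (by fun_prop : Continuous fun x => (s, x))).continuousOn.integrableOn_compact
    (isCompact_closedBall _ _)

theorem J_add {n : ℕ} (R : ℝ) {f g : ℝ × EuclideanSpace ℝ (Fin n) → ℝ} (hf : Continuous f)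
    (hg : Continuous g) (s : ℝ) : J R (fun p => f p + g p) s = J R f s + J R g s :=
  integral_add (intOn R hf s) (intOn R hg s)

theorem J_sum {n : ℕ} (R : ℝ) {ι : Type*} [Fintype ι] {f : ι → ℝ × EuclideanSpace ℝ (Fin n) → ℝ}
    (hf : ∀ i, Continuous (f i)) (s : ℝ) :
    J R (fun p => ∑ i, f i p) s = ∑ i, J R (f i) s :=
  integral_finsetSum _ (fun i _ => intOn R (hf i) s)

theorem J_mul {n : ℕ} (R c : ℝ) {f : ℝ × EuclideanSpace ℝ (Fin n) → ℝ} (s : ℝ) :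
    J R (fun p => c * f p) s = c * J R f s :=
  integral_const_mul _ _

theorem J_nonneg {n : ℕ} (R : ℝ) {f : ℝ × EuclideanSpace ℝ (Fin n) → ℝ} (hf : ∀ p, 0 ≤ f p)
    (s : ℝ) : 0 ≤ J R f s :=
  integral_nonneg (fun x => hf (s, x))

theorem J_congr {n : ℕ} (R : ℝ) {f g : ℝ × EuclideanSpace ℝ (Fin n) → ℝ} (s : ℝ)
    (h : ∀ x, f (s, x) = g (s, x)) : J R f s = J R g s := by
  unfold J; simp_rw [h]

theorem J_eq {n : ℕ} {T R s : ℝ} {f : ℝ × EuclideanSpace ℝ (Fin n) → ℝ} (h : Van T R f)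
    (hs : s ∈ Set.Icc 0 T) : ∫ x, f (s, x) = J R f s := by
  symm
  apply setIntegral_eq_integral_of_forall_compl_eq_zero
  intro x hx
  exact h _ ⟨hs, by simpa using hx⟩

theorem Van.integrable {n : ℕ} {T R s : ℝ} {f : ℝ × EuclideanSpace ℝ (Fin n) → ℝ}
    (h : Van T R f) (hf : Continuous f)
    (hs : s ∈ Set.Icc 0 T) : Integrable (fun x => f (s, x)) := by
  apply (integrableOn_iff_integrable_of_support_subset _).1 (intOn R hf s)
  intro x hx
  by_contra hx'
  exact hx (h _ ⟨hs, by simpa using hx'⟩)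

theorem J_ibp {n : ℕ} {T R s : ℝ} (hT : 0 < T) {f g : ℝ × EuclideanSpace ℝ (Fin n) → ℝ}
    (hf : ContDiff ℝ (⊤ : ℕ∞) f) (hg : ContDiff ℝ (⊤ : ℕ∞) g) (hfv : Van T R f)
    (hs : s ∈ Set.Icc 0 T) (v : EuclideanSpace ℝ (Fin n)) :
    J R (fun p => f p * DD g (0, v) p) s = - J R (fun p => DD f (0, v) p * g p) s := by
  have v1 : Van T R (fun p => f p * DD g (0, v) p) := fun p hp => by simp [hfv p hp]
  have v2 : Van T R (fun p => DD f (0, v) p * g p) := fun p hp => by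
    simp [hfv.DD hT hf (0, v) p hp]
  have v3 : Van T R (fun p => f p * g p) := fun p hp => by simp [hfv p hp]
  have c1 := (DD_smooth hf (0, v)).continuous
  have c2 := (DD_smooth hg (0, v)).continuous
  have c3 := hf.continuous
  have c4 := hg.continuous
  rw [← J_eq v1 hs, ← J_eq v2 hs]
  have := integral_mul_fderiv_eq_neg_fderiv_mul_of_integrable (μ := volume) (𝕜 := ℝ)
    (f := fun x => f (s, x)) (g := fun x => g (s, x)) (v := v) ?_ ?_ ?_ ?_ ?_
  · simpa only [fderiv_slice hf, fderiv_slice hg] using this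
  · simpa only [fderiv_slice hf, fderiv_slice hg] using v2.integrable (c1.mul c4) hs
  · simpa only [fderiv_slice hf, fderiv_slice hg] using v1.integrable (c3.mul c2) hs
  · exact v3.integrable (c3.mul c4) hs
  · exact fun x _ => (hasFDerivAt_slice hf s x).differentiableAt
  · exact fun x _ => (hasFDerivAt_slice hg s x).differentiableAt

theorem J_hasDerivAt {n : ℕ} (R : ℝ) {f g : ℝ × EuclideanSpace ℝ (Fin n) → ℝ}
    (hf : Continuous f) (hg : Continuous g)
    (h : ∀ s x, HasDerivAt (fun r => f (r, x)) (g (s, x)) s) (s : ℝ) :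
    HasDerivAt (J R f) (J R g s) s := by
  have hK : IsCompact (Set.Icc (s - 1) (s + 1) ×ˢ
    Metric.closedBall (0 : EuclideanSpace ℝ (Fin n)) R) :=
    isCompact_Icc.prod (isCompact_closedBall _ _)
  obtain ⟨C, hC⟩ := hK.exists_bound_of_continuousOn hg.continuousOn
  have := hasDerivAt_integral_of_dominated_loc_of_deriv_le (𝕜 := ℝ)
    (μ := volume.restrict (Metric.closedBall (0 : EuclideanSpace ℝ (Fin n)) R))
    (F := fun r x => f (r, x)) (F' := fun r x => g (r, x)) (x₀ := s)
    (s := Set.Icc (s - 1) (s + 1)) (bound := fun _ => C)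
    (Icc_mem_nhds (by linarith) (by linarith))
    (Filter.Eventually.of_forall fun r => (intOn R hf r).1)
    (intOn R hf s) (intOn R hg s).1 ?_ ?_ ?_
  · exact this.2
  · filter_upwards [ae_restrict_mem measurableSet_closedBall] with x hx r hr
    exact hC (r, x) ⟨hr, hx⟩
  · exact integrableOn_const (by exact (isCompact_closedBall _ _).measure_lt_top.ne)
  · exact Filter.Eventually.of_forall fun x r _ => h r x

theorem grad_sq_s15 {n : ℕ} {w : ℝ × EuclideanSpace ℝ (Fin n) → ℝ}
    (hw : ContDiff ℝ (⊤ : ℕ∞) w) (s : ℝ) (x : EuclideanSpace ℝ (Fin n)) :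
    ‖gradient (fun y => w (s, y)) x‖ ^ 2
      = ∑ i, (DD w (0, EuclideanSpace.single i 1) (s, x)) ^ 2 := by
  rw [EuclideanSpace.norm_sq_eq]
  refine Finset.sum_congr rfl fun i _ => ?_
  rw [← fderiv_slice hw]
  have : fderiv ℝ (fun y => w (s, y)) x (EuclideanSpace.single i 1)
      = inner ℝ (gradient (fun y => w (s, y)) x) (EuclideanSpace.single i 1) := by
    simp [gradient]
  rw [this, EuclideanSpace.inner_single_right]
  simp

theorem lap_slice {n : ℕ} {w : ℝ × EuclideanSpace ℝ (Fin n) → ℝ}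
    (hw : ContDiff ℝ (⊤ : ℕ∞) w) (s : ℝ) (x : EuclideanSpace ℝ (Fin n)) :
    lap (fun y => w (s, y)) x
      = ∑ i, DD (DD w (0, EuclideanSpace.single i 1)) (0, EuclideanSpace.single i 1) (s, x) := by
  unfold lap
  refine Finset.sum_congr rfl fun i _ => ?_
  rw [iteratedFDeriv_two_apply]
  simp only [Matrix.cons_val_zero, Matrix.cons_val_one]
  have hs : ContDiff ℝ (⊤ : ℕ∞) (fun y => w (s, y)) := hw.comp (by fun_prop)
  have h1 : DifferentiableAt ℝ (fderiv ℝ (fun y => w (s, y))) x :=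
    ((hs.fderiv_right (m := (⊤ : ℕ∞)) (by norm_cast)).differentiable (by simp)) x
  rw [← fderiv_slice (DD_smooth hw _)]
  simp_rw [← fderiv_slice hw]
  rw [fderiv_clm_apply h1 (differentiableAt_const _)]
  simp

/-- The scalar argument. -/
theorem scalar_part {t : ℝ} (ht : 0 ≤ t) (a G m c G' a' c' : ℝ → ℝ)
    (ha : ∀ s, HasDerivAt a (a' s) s) (hG : ∀ s, HasDerivAt G (G' s) s)
    (hm : ∀ s, HasDerivAt m (2 * c s) s) (hc : ∀ s, HasDerivAt c (c' s) s)
    (I1 : ∀ s ∈ Set.Icc 0 t, a' s + G' s = - 2 * a s)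
    (I2 : ∀ s ∈ Set.Icc 0 t, c' s = a s - G s - c s)
    (ha0 : ∀ s, 0 ≤ a s) (hG0 : ∀ s, 0 ≤ G s) (hm0 : ∀ s, 0 ≤ m s)
    (hcs : - c t ≤ a t + m t / 4) :
    ((∫ s in (0:ℝ)..t, (1 + s) * G s) + ((1 + t) / 4) * m t
      ≤ 3 * ((1/2) * (a 0 + G 0)) + 3 * (∫ s in (0:ℝ)..t, (1/2) * (a s + G s))
        + c 0 + (1/2) * m t + ∫ s in (0:ℝ)..t, m s) ∧
      (∫ s in (0:ℝ)..t, (1 + s) * a s)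
        ≤ (1/2) * (a 0 + G 0) + ∫ s in (0:ℝ)..t, (1/2) * (a s + G s) := by
  have ca : Continuous a := continuous_iff_continuousAt.2 fun s => (ha s).continuousAt
  have cG : Continuous G := continuous_iff_continuousAt.2 fun s => (hG s).continuousAt
  have cm : Continuous m := continuous_iff_continuousAt.2 fun s => (hm s).continuousAt
  have cc : Continuous c := continuous_iff_continuousAt.2 fun s => (hc s).continuousAt
  have i1 : ∀ f : ℝ → ℝ, Continuous f → IntervalIntegrable f volume 0 t :=
    fun f hf => hf.intervalIntegrable _ _
  have F1 : ∫ s in (0:ℝ)..t, ((1/2) * (a s + G s) - (1 + s) * a s)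
      = (1 + t) * ((1/2) * (a t + G t)) - (1 + 0) * ((1/2) * (a 0 + G 0)) := by
    refine intervalIntegral.integral_eq_sub_of_hasDerivAt
      (f := fun s => (1 + s) * ((1/2) * (a s + G s))) (fun s hs => ?_) (i1 _ (by fun_prop))
    rw [Set.uIcc_of_le ht] at hs
    have h1 : HasDerivAt (fun r : ℝ => 1 + r) 1 s := (hasDerivAt_id' s).const_add 1
    refine HasDerivAt.congr_deriv (h1.mul (((ha s).add (hG s)).const_mul (1/2))) ?_
    try simp only [Pi.add_apply]
    linear_combination ((1 + s) / 2) * I1 s hs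
  have F2 : ∫ s in (0:ℝ)..t, ((1 + s) * a s - (1 + s) * G s + (1/2) * m s)
      = ((1 + t) * c t + (1 + t) / 2 * m t - (1/2) * m t)
        - ((1 + 0) * c 0 + (1 + 0) / 2 * m 0 - (1/2) * m 0) := by
    refine intervalIntegral.integral_eq_sub_of_hasDerivAt
      (f := fun s => (1 + s) * c s + (1 + s) / 2 * m s - (1/2) * m s)
      (fun s hs => ?_) (i1 _ (by fun_prop))
    rw [Set.uIcc_of_le ht] at hs
    have h1 : HasDerivAt (fun r : ℝ => 1 + r) 1 s := (hasDerivAt_id' s).const_add 1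
    refine HasDerivAt.congr_deriv (((h1.mul (hc s)).add
      ((h1.div_const 2).mul (hm s))).sub
      ((hm s).const_mul (1/2))) ?_
    linear_combination (1 + s) * I2 s hs
  rw [intervalIntegral.integral_sub (i1 _ (by fun_prop)) (i1 _ (by fun_prop))] at F1
  rw [intervalIntegral.integral_add (i1 _ (by fun_prop)) (i1 _ (by fun_prop)),
    intervalIntegral.integral_sub (i1 _ (by fun_prop)) (i1 _ (by fun_prop)),
    intervalIntegral.integral_const_mul (1/2) m] at F2
  have n1 : 0 ≤ ∫ s in (0:ℝ)..t, m s := intervalIntegral.integral_nonneg ht fun s _ => hm0 s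
  have n2 : 0 ≤ ∫ s in (0:ℝ)..t, (1 + s) * a s :=
    intervalIntegral.integral_nonneg ht fun s hs => mul_nonneg (by linarith [hs.1]) (ha0 s)
  have n3 : 0 ≤ (1 + t) * a t := mul_nonneg (by linarith) (ha0 t)
  have n4 : 0 ≤ (1 + t) * G t := mul_nonneg (by linarith) (hG0 t)
  have n5 := mul_le_mul_of_nonneg_left hcs (by linarith : 0 ≤ 1 + t)
  constructor
  · nlinarith
  · nlinarith

theorem damped_wave_weighted_space_estimates (n : ℕ) (hn : 1 ≤ n)
    (V : EuclideanSpace ℝ (Fin n) → ℝ)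
    (hVcont : Continuous V) (hVbdd : ∃ M, ∀ x, |V x| ≤ M)
    (hVnonneg : ∀ x, 0 ≤ V x)
    (u : ℝ → EuclideanSpace ℝ (Fin n) → ℝ)
    (u₀ u₁ : EuclideanSpace ℝ (Fin n) → ℝ)
    (hu : ContDiff ℝ (⊤ : ℕ∞) (fun p : ℝ × EuclideanSpace ℝ (Fin n) => u p.1 p.2))
    (hu₀smooth : ContDiff ℝ (⊤ : ℕ∞) u₀) (hu₀supp : HasCompactSupport u₀)
    (hu₁smooth : ContDiff ℝ (⊤ : ℕ∞) u₁) (hu₁supp : HasCompactSupport u₁)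
    (hPDE : ∀ t, 0 ≤ t → ∀ x,
      deriv (fun s => deriv (fun r => u r x) s) t - lap (u t) x + V x * u t x
        + deriv (fun s => u s x) t = 0)
    (hinit0 : ∀ x, u 0 x = u₀ x)
    (hinit1 : ∀ x, deriv (fun s => u s x) 0 = u₁ x)
    (hsupp : ∀ T, 0 < T → ∃ R, 0 < R ∧ ∀ t ∈ Set.Icc (0:ℝ) T, ∀ x,
      R ≤ ‖x‖ → u t x = 0)
    :
    ∀ t, 0 ≤ t →
      ((∫ s in (0:ℝ)..t, (1 + s) *
          ((∫ x, ‖gradient (u s) x‖ ^ 2) + ∫ x, V x * (u s x) ^ 2))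
        + ((1 + t) / 4) * (∫ x, (u t x) ^ 2)
      ≤ 3 * energy V u 0 + 3 * (∫ s in (0:ℝ)..t, energy V u s)
        + (∫ x, u₁ x * u₀ x) + (1/2) * (∫ x, (u t x) ^ 2)
        + ∫ s in (0:ℝ)..t, ∫ x, (u s x) ^ 2) ∧
      (∫ s in (0:ℝ)..t, (1 + s) * ∫ x, (deriv (fun r => u r x) s) ^ 2)
        ≤ energy V u 0 + ∫ s in (0:ℝ)..t, energy V u s := by
  intro t ht
  obtain ⟨R, hR, hRs⟩ := hsupp (t + 1) (by linarith)
  have hT : 0 < t + 1 := by linarith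
  set w : ℝ × EuclideanSpace ℝ (Fin n) → ℝ := fun p => u p.1 p.2 with hw
  have vw : Van (t + 1) R w := fun p hp => hRs p.1 hp.1 p.2 (le_of_lt hp.2)
  have eu : ∀ s, u s = fun y => w (s, y) := fun s => rfl
  set e : Fin n → ℝ × EuclideanSpace ℝ (Fin n) := fun i => (0, EuclideanSpace.single i 1) with he
  set Ut := DD w (1, 0) with hUt
  have sUt : ContDiff ℝ (⊤ : ℕ∞) Ut := DD_smooth hu _
  have vUt : Van (t + 1) R Ut := vw.DD hT hu _
  set Ui : Fin n → ℝ × EuclideanSpace ℝ (Fin n) → ℝ := fun i => DD w (e i) with hUi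
  have sUi : ∀ i, ContDiff ℝ (⊤ : ℕ∞) (Ui i) := fun i => DD_smooth hu _
  have vUi : ∀ i, Van (t + 1) R (Ui i) := fun i => vw.DD hT hu _
  set Utt := DD Ut (1, 0) with hUtt
  have cUtt : Continuous Utt := (DD_smooth sUt _).continuous
  have cUit : ∀ i, Continuous (DD (Ui i) (1, 0)) := fun i => (DD_smooth (sUi i) _).continuous
  have cUii : ∀ i, Continuous (DD (Ui i) (e i)) := fun i => (DD_smooth (sUi i) _).continuous
  have cw : Continuous w := hu.continuous
  have cUt : Continuous Ut := sUt.continuous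
  have cUi : ∀ i, Continuous (Ui i) := fun i => (sUi i).continuous
  have dut : ∀ s x, deriv (fun r => u r x) s = Ut (s, x) := fun s x =>
    (hasDerivAt_slice hu s x).deriv
  have dutt : ∀ s x, deriv (fun r => deriv (fun q => u q x) r) s = Utt (s, x) := fun s x => by
    simp_rw [dut]
    exact (hasDerivAt_slice sUt s x).deriv
  have pde : ∀ s, 0 ≤ s → ∀ x,
      Utt (s, x) - (∑ i, DD (Ui i) (e i) (s, x)) + V x * w (s, x) + Ut (s, x) = 0 := by
    intro s hs x
    have := hPDE s hs x
    rw [dutt, dut, eu s, lap_slice hu] at this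
    exact this
  have gsq : ∀ s x, ‖gradient (u s) x‖ ^ 2 = ∑ i, (Ui i (s, x)) ^ 2 := fun s x => grad_sq_s15 hu s x
  -- the scalar functions
  set a := J R (fun p => Ut p ^ 2) with ha
  set gr := J R (fun p => ∑ i, Ui i p ^ 2) with hgr
  set vv := J R (fun p => V p.2 * w p ^ 2) with hvv
  set m := J R (fun p => w p ^ 2) with hm
  set c := J R (fun p => Ut p * w p) with hc
  have hVc : Continuous (fun p : ℝ × EuclideanSpace ℝ (Fin n) => V p.2) :=
    hVcont.comp continuous_snd
  have cgr : Continuous (fun p => ∑ i, Ui i p ^ 2) := by fun_prop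
  have cvv : Continuous (fun p => V p.2 * w p ^ 2) := by fun_prop
  have vgr : Van (t + 1) R (fun p => ∑ i, Ui i p ^ 2) := fun p hp => by
    simp [vUi _ p hp]
  have vvv : Van (t + 1) R (fun p => V p.2 * w p ^ 2) := fun p hp => by simp [vw p hp]
  have va : Van (t + 1) R (fun p => Ut p ^ 2) := fun p hp => by simp [vUt p hp]
  have vm : Van (t + 1) R (fun p => w p ^ 2) := fun p hp => by simp [vw p hp]
  have vc : Van (t + 1) R (fun p => Ut p * w p) := fun p hp => by simp [vw p hp]
  have ven : Van (t + 1) R (fun p => Ut p ^ 2 + ∑ i, Ui i p ^ 2 + V p.2 * w p ^ 2) :=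
    fun p hp => by simp [vw p hp, vUt p hp, vUi _ p hp]
  have E1 : ∀ s ∈ Set.Icc 0 (t + 1), energy V u s = (1/2) * (a s + (gr s + vv s)) := by
    intro s hs
    unfold energy
    simp_rw [dut, gsq]
    rw [J_eq ven hs, J_add R (by fun_prop) cvv, J_add R (by fun_prop) cgr]
    ring
  have E2 : ∀ s ∈ Set.Icc 0 (t + 1), ∫ x, ‖gradient (u s) x‖ ^ 2 = gr s := by
    intro s hs
    simp_rw [gsq]
    exact J_eq vgr hs
  have E3 : ∀ s ∈ Set.Icc 0 (t + 1), ∫ x, V x * (u s x) ^ 2 = vv s := fun s hs => J_eq vvv hs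
  have E4 : ∀ s ∈ Set.Icc 0 (t + 1), ∫ x, (u s x) ^ 2 = m s := fun s hs => J_eq vm hs
  have E5 : ∀ s ∈ Set.Icc 0 (t + 1), ∫ x, (deriv (fun r => u r x) s) ^ 2 = a s := by
    intro s hs
    simp_rw [dut]
    exact J_eq va hs
  have E6 : ∫ x, u₁ x * u₀ x = c 0 := by
    simp_rw [← hinit0, ← hinit1, dut]
    exact J_eq vc ⟨le_rfl, hT.le⟩
  -- derivatives
  have da : ∀ s, HasDerivAt a (2 * J R (fun p => Ut p * Utt p) s) s := by
    intro s
    rw [← J_mul]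
    refine J_hasDerivAt R (by fun_prop) (by fun_prop) (fun s x => ?_) s
    refine HasDerivAt.congr_deriv ((hasDerivAt_slice sUt s x).pow 2) ?_
    simp only [hUtt]; ring
  have dgr : ∀ s, HasDerivAt gr (2 * J R (fun p => ∑ i, Ui i p * DD (Ui i) (1, 0) p) s) s := by
    intro s
    rw [← J_mul]
    refine J_hasDerivAt R (by fun_prop) (by fun_prop) (fun s x => ?_) s
    refine HasDerivAt.congr_deriv (HasDerivAt.fun_sum (fun i (_ : i ∈ Finset.univ) =>
      (hasDerivAt_slice (sUi i) s x).pow 2)) ?_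
    rw [Finset.mul_sum]
    refine Finset.sum_congr rfl fun i _ => ?_
    ring
  have dvv : ∀ s, HasDerivAt vv (2 * J R (fun p => V p.2 * w p * Ut p) s) s := by
    intro s
    rw [← J_mul]
    refine J_hasDerivAt R (by fun_prop) (by fun_prop) (fun s x => ?_) s
    refine HasDerivAt.congr_deriv (((hasDerivAt_slice hu s x).pow 2).const_mul (V x)) ?_
    simp only [hUt]; ring
  have dm : ∀ s, HasDerivAt m (2 * c s) s := by
    intro s
    rw [hc, ← J_mul]
    refine J_hasDerivAt R (by fun_prop) (by fun_prop) (fun s x => ?_) s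
    refine HasDerivAt.congr_deriv ((hasDerivAt_slice hu s x).pow 2) ?_
    simp only [hUt]; ring
  have dc : ∀ s, HasDerivAt c (J R (fun p => Utt p * w p + Ut p ^ 2) s) s := by
    intro s
    refine J_hasDerivAt R (by fun_prop) (by fun_prop) (fun s x => ?_) s
    refine HasDerivAt.congr_deriv ((hasDerivAt_slice sUt s x).mul (hasDerivAt_slice hu s x)) ?_
    simp only [hUtt, hUt]; ring
  -- integration by parts
  have P1 : ∀ s ∈ Set.Icc 0 (t + 1), J R (fun p => ∑ i, Ui i p * DD (Ui i) (1, 0) p) s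
      = - J R (fun p => ∑ i, DD (Ui i) (e i) p * Ut p) s := by
    intro s hs
    rw [J_sum R (fun i => by fun_prop), J_sum R (fun i => by fun_prop), ← Finset.sum_neg_distrib]
    refine Finset.sum_congr rfl fun i _ => ?_
    rw [← J_ibp hT (sUi i) sUt (vUi i) hs]
    refine J_congr R s fun x => ?_
    have := DD_symm hu (e i) (1, 0) (s, x)
    simp only [hUi, hUt]
    rw [this]
  have P2 : ∀ s ∈ Set.Icc 0 (t + 1), J R (fun p => ∑ i, w p * DD (Ui i) (e i) p) s
      = - gr s := by
    intro s hs
    rw [hgr, J_sum R (fun i => by fun_prop), J_sum R (fun i => by fun_prop),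
      ← Finset.sum_neg_distrib]
    refine Finset.sum_congr rfl fun i _ => ?_
    rw [J_ibp hT hu (sUi i) vw hs]
    congr 1
    refine J_congr R s fun x => ?_
    simp only [hUi]; ring
  have I1 : ∀ s ∈ Set.Icc 0 t, 2 * J R (fun p => Ut p * Utt p) s
      + (2 * J R (fun p => ∑ i, Ui i p * DD (Ui i) (1, 0) p) s
        + 2 * J R (fun p => V p.2 * w p * Ut p) s) = - 2 * a s := by
    intro s hs
    rw [P1 s ⟨hs.1, by linarith [hs.2]⟩]
    have : J R (fun p => ∑ i, DD (Ui i) (e i) p * Ut p) s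
        = J R (fun p => Ut p * Utt p + V p.2 * w p * Ut p + Ut p ^ 2) s := by
      refine J_congr R s fun x => ?_
      rw [← Finset.sum_mul]
      linear_combination (- Ut (s, x)) * pde s hs.1 x
    rw [this, J_add R (by fun_prop) (by fun_prop), J_add R (by fun_prop) (by fun_prop)]
    ring
  have I2 : ∀ s ∈ Set.Icc 0 t, J R (fun p => Utt p * w p + Ut p ^ 2) s
      = a s - (gr s + vv s) - c s := by
    intro s hs
    have h1 := P2 s ⟨hs.1, by linarith [hs.2]⟩
    have : J R (fun p => ∑ i, w p * DD (Ui i) (e i) p) s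
        = J R (fun p => Utt p * w p + V p.2 * w p ^ 2 + Ut p * w p) s := by
      refine J_congr R s fun x => ?_
      rw [← Finset.mul_sum]
      linear_combination (- w (s, x)) * pde s hs.1 x
    rw [this, J_add R (by fun_prop) (by fun_prop), J_add R (by fun_prop) (by fun_prop)] at h1
    rw [J_add R (by fun_prop) (by fun_prop)]
    linarith
  have hcs : - c t ≤ a t + m t / 4 := by
    have h0 : 0 ≤ J R (fun p => Ut p ^ 2 + Ut p * w p + (1/4) * w p ^ 2) t :=
      J_nonneg R (fun p => by nlinarith [sq_nonneg (Ut p + w p / 2)]) t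
    rw [J_add R (by fun_prop) (by fun_prop), J_add R (by fun_prop) (by fun_prop), J_mul] at h0
    linarith
  have key := scalar_part ht a (fun s => gr s + vv s) m c _ _ _ da
    (fun s => (dgr s).add (dvv s)) dm dc I1 I2 (J_nonneg R fun p => sq_nonneg _)
    (fun s => add_nonneg (J_nonneg R (fun p => Finset.sum_nonneg fun i _ => sq_nonneg _) s)
      (J_nonneg R (fun p => mul_nonneg (hVnonneg _) (sq_nonneg _)) s))
    (J_nonneg R fun p => sq_nonneg _) hcs
  have sub : ∀ s ∈ Set.uIcc 0 t, s ∈ Set.Icc 0 (t + 1) := fun s hs => by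
    rw [Set.uIcc_of_le ht] at hs
    exact ⟨hs.1, by linarith [hs.2]⟩
  rw [E1 0 ⟨le_rfl, hT.le⟩, E4 t ⟨ht, by linarith⟩, E6,
    intervalIntegral.integral_congr (g := fun s => (1 + s) * (gr s + vv s))
      (fun s hs => by simp only [E2 s (sub s hs), E3 s (sub s hs)]),
    intervalIntegral.integral_congr (f := fun s => energy V u s)
      (g := fun s => (1/2) * (a s + (gr s + vv s))) (fun s hs => E1 s (sub s hs)),
    intervalIntegral.integral_congr (f := fun s => ∫ x, (u s x) ^ 2)
      (g := m) (fun s hs => E4 s (sub s hs)),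
    intervalIntegral.integral_congr (f := fun s => (1 + s) * ∫ x, (deriv (fun r => u r x) s) ^ 2)
      (g := fun s => (1 + s) * a s) (fun s hs => by simp only [E5 s (sub s hs)])]
  exact key
end
end

section
/- Let n ≥ 1, let V : ℝⁿ → ℝ be bounded, continuous and nonnegative, and let u : [0,∞) × ℝⁿ → ℝ be a smooth solution of ∂ₜ²u − Δₓu + V·u + ∂ₜu = 0 with u(0,·) = u₀ ∈ Cc^∞(ℝⁿ), ∂ₜu(0,·) = u₁ ∈ Cc^∞(ℝⁿ), such that for every T > 0 there is R > 0 with u(t,·) supported in the ball of radius R for all t ∈ [0,T]. Set I₀² := 3E(0) + ½‖u₀‖² + (u₁,u₀). Then for all t ≥ 0: (1+t)² E(t) ≤ 9E(0) + 6I₀² + (u₁,u₀) + ∫₀ᵗ ‖u(s,·)‖² ds, and ((1+t)/4)‖u(t,·)‖² ≤ 6E(0) + 5I₀² + (u₁,u₀) + ∫₀ᵗ ‖u(s,·)‖² ds. -/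
open MeasureTheory

noncomputable section

theorem dw_ode (K E w m : ℝ → ℝ) (T : ℝ) (hT : 0 ≤ T)
    (cE : Continuous E) (cw : Continuous w) (cm : Continuous m)
    (hE : ∀ t ∈ Set.Ioo 0 T, HasDerivAt E (-K t) t)
    (hw : ∀ t ∈ Set.Ioo 0 T, HasDerivAt w (2 * K t - 2 * E t - w t) t)
    (hm : ∀ t ∈ Set.Ioo 0 T, HasDerivAt m (2 * w t) t)
    (hK : ∀ t ∈ Set.Icc 0 T, 0 ≤ K t) (hKE : ∀ t ∈ Set.Icc 0 T, K t ≤ 2 * E t)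
    (hm0 : ∀ t ∈ Set.Icc 0 T, 0 ≤ m t)
    (h1 : ∀ t ∈ Set.Icc 0 T, 0 ≤ K t / 2 + m t / 2 + w t)
    (h2 : ∀ t ∈ Set.Icc 0 T, 0 ≤ K t + m t / 4 + w t) :
    (1 + T) ^ 2 * E T ≤ 9 * E 0 + 6 * (3 * E 0 + (1/2) * m 0 + w 0) + w 0 + ∫ s in (0:ℝ)..T, m s ∧
    ((1 + T) / 4) * m T ≤ 6 * E 0 + 5 * (3 * E 0 + (1/2) * m 0 + w 0) + w 0
      + ∫ s in (0:ℝ)..T, m s := by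
  have mem0 : (0:ℝ) ∈ Set.Icc 0 T := ⟨le_rfl, hT⟩
  have memT : T ∈ Set.Icc 0 T := ⟨hT, le_rfl⟩
  have hJ : ∀ t, HasDerivAt (fun t => ∫ s in (0:ℝ)..t, m s) (m t) t := fun t =>
    intervalIntegral.integral_hasDerivAt_right (cm.intervalIntegrable _ _)
      (cm.stronglyMeasurableAtFilter _ _) cm.continuousAt
  have cJ : Continuous (fun t => ∫ s in (0:ℝ)..t, m s) :=
    continuous_iff_continuousAt.2 fun t => (hJ t).continuousAt
  have hJ0 : 0 ≤ ∫ s in (0:ℝ)..T, m s := intervalIntegral.integral_nonneg hT hm0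
  have aF : w T + m T / 2 + 2 * E T ≤ w 0 + m 0 / 2 + 2 * E 0 := by
    have : AntitoneOn (fun t => w t + m t / 2 + 2 * E t) (Set.Icc 0 T) := by
      have hd : ∀ t ∈ Set.Ioo 0 T, HasDerivAt (fun t => w t + m t / 2 + 2 * E t) (-2 * E t) t := by
        intro t ht
        refine (((hw t ht).add ((hm t ht).div_const 2)).add ((hE t ht).const_mul 2)).congr_deriv ?_
        ring
      apply antitoneOn_of_deriv_nonpos (convex_Icc 0 T)
      · fun_prop
      · rw [interior_Icc]
        exact fun t ht => (hd t ht).differentiableAt.differentiableWithinAt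
      · rw [interior_Icc]
        intro t ht
        rw [(hd t ht).deriv]
        have := hK t (Set.Ioo_subset_Icc_self ht)
        have := hKE t (Set.Ioo_subset_Icc_self ht)
        linarith
    exact this mem0 memT hT
  have aP : (1+T)^2 * E T + (1+T) * (w T + m T / 2 + 2 * E T) - m T / 2
      - (∫ s in (0:ℝ)..T, m s) / 2 + (w T + m T / 2 + 2 * E T) ≤
      E 0 + (w 0 + m 0 / 2 + 2 * E 0) - m 0 / 2 + (w 0 + m 0 / 2 + 2 * E 0) := by
    have : AntitoneOn (fun t => (1+t)^2 * E t + (1+t) * (w t + m t / 2 + 2 * E t) - m t / 2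
      - (∫ s in (0:ℝ)..t, m s) / 2 + (w t + m t / 2 + 2 * E t)) (Set.Icc 0 T) := by
      have hd : ∀ t ∈ Set.Ioo 0 T, HasDerivAt
          (fun t => (1+t)^2 * E t + (1+t) * (w t + m t / 2 + 2 * E t) - m t / 2
      - (∫ s in (0:ℝ)..t, m s) / 2 + (w t + m t / 2 + 2 * E t)) (-(1+t)^2 * K t) t := by
        intro t ht
        have hF := (((hw t ht).add ((hm t ht).div_const 2)).add ((hE t ht).const_mul 2))
        have hl : HasDerivAt (fun t : ℝ => 1 + t) 1 t := (hasDerivAt_id t).const_add 1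
        refine ((((((hl.pow 2).mul (hE t ht)).add (hl.mul hF)).sub
          ((hm t ht).div_const 2)).sub ((hJ t).div_const 2)).add hF).congr_deriv ?_
        simp
        ring
      apply antitoneOn_of_deriv_nonpos (convex_Icc 0 T)
      · fun_prop
      · rw [interior_Icc]
        exact fun t ht => (hd t ht).differentiableAt.differentiableWithinAt
      · rw [interior_Icc]
        intro t ht
        rw [(hd t ht).deriv]
        have := hK t (Set.Ioo_subset_Icc_self ht)
        nlinarith [mul_nonneg (sq_nonneg (1+t)) this]
    have := this mem0 memT hT
    simpa using this
  have a0 := hK 0 mem0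
  have a1 := hK T memT
  have b0 := hKE 0 mem0
  have b1 := hKE T memT
  have c0 := h1 0 mem0
  have c1 := h1 T memT
  have d1 := h2 T memT
  have p1 : 0 ≤ (1+T)^2 * E T := mul_nonneg (sq_nonneg _) (by linarith)
  have p2 : 0 ≤ (1+T) * (w T + m T / 2 + 2 * E T - m T / 4) :=
    mul_nonneg (by linarith) (by linarith)
  have p3 : 0 ≤ (1+T) * m T := mul_nonneg (by linarith) (hm0 T memT)
  constructor <;> nlinarith

theorem dw_param {S : Type*} [NormedAddCommGroup S] [MeasurableSpace S] [BorelSpace S]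
    [SecondCountableTopology S]
    (μ : Measure S) [IsFiniteMeasureOnCompacts μ] (B : Set S) (hB : IsCompact B)
    (g g' : ℝ × S → ℝ) (hg : Continuous g) (hg' : Continuous g')
    (hd : ∀ t x, HasDerivAt (fun s => g (s, x)) (g' (t, x)) t) (t : ℝ) :
    HasDerivAt (fun s => ∫ x in B, g (s, x) ∂μ) (∫ x in B, g' (t, x) ∂μ) t := by
  obtain ⟨C, hC⟩ := ((isCompact_Icc (a := t - 1) (b := t + 1)).prod hB).exists_bound_of_continuousOn
    hg'.continuousOn
  have hfin : μ B < ⊤ := hB.measure_lt_top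
  refine (hasDerivAt_integral_of_dominated_loc_of_deriv_le (μ := μ.restrict B)
    (F := fun s x => g (s, x)) (F' := fun s x => g' (s, x)) (x₀ := t)
    (s := Set.Icc (t-1) (t+1)) (bound := fun _ => C)
    (Icc_mem_nhds (by linarith) (by linarith)) ?_ ?_ ?_ ?_ ?_ ?_).2
  · exact Filter.Eventually.of_forall fun s =>
      (by fun_prop : Continuous fun x => g (s, x)).aestronglyMeasurable
  · exact (by fun_prop : Continuous fun x => g (t, x)).continuousOn.integrableOn_compact hB
  · exact (by fun_prop : Continuous fun x => g' (t, x)).aestronglyMeasurable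
  · filter_upwards [ae_restrict_mem hB.measurableSet] with x hx s hs
    exact hC (s, x) ⟨hs, hx⟩
  · exact integrableOn_const hfin.ne
  · exact Filter.Eventually.of_forall fun x s _ => hd s x

/-- Directional derivative on space-time. -/
def dwD {S : Type*} [NormedAddCommGroup S] [NormedSpace ℝ S] (v : ℝ × S) (F : ℝ × S → ℝ)
    (p : ℝ × S) : ℝ := fderiv ℝ F p v

section
variable {S : Type*} [NormedAddCommGroup S] [NormedSpace ℝ S]

theorem dwD_smooth (v : ℝ × S) {F : ℝ × S → ℝ} (hF : ContDiff ℝ (⊤ : ℕ∞) F) :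
    ContDiff ℝ (⊤ : ℕ∞) (dwD v F) :=
  (hF.fderiv_right (m := (⊤ : ℕ∞)) (by simp)).clm_apply contDiff_const

theorem dwD_comm (v w : ℝ × S) {F : ℝ × S → ℝ} (hF : ContDiff ℝ (⊤ : ℕ∞) F) :
    dwD v (dwD w F) = dwD w (dwD v F) := by
  have h : ∀ v w p, dwD v (dwD w F) p = fderiv ℝ (fderiv ℝ F) p v w := by
    intro v w p
    have hd : DifferentiableAt ℝ (fderiv ℝ F) p :=
      (hF.fderiv_right (m := (⊤ : ℕ∞)) (by simp)).differentiable (by simp) p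
    unfold dwD
    rw [fderiv_clm_apply hd (differentiableAt_const w)]
    simp
  ext p
  rw [h, h]
  have : ContDiffAt ℝ (⊤ : ℕ∞) F p := hF.contDiffAt
  exact this.isSymmSndFDerivAt (by rw [minSmoothness_of_isRCLikeNormedField]; exact WithTop.coe_le_coe.2 le_top) v w

theorem dwD_time {F : ℝ × S → ℝ} (hF : ContDiff ℝ (⊤ : ℕ∞) F) (t : ℝ) (x : S) :
    HasDerivAt (fun s => F (s, x)) (dwD (1, 0) F (t, x)) t := by
  have h1 : HasFDerivAt F (fderiv ℝ F (t, x)) (t, x) :=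
    (hF.differentiable (by simp) _).hasFDerivAt
  have h2 : HasDerivAt (fun s : ℝ => (s, x)) (1, 0) t :=
    (hasDerivAt_id t).prodMk (hasDerivAt_const t x)
  exact h1.comp_hasDerivAt t h2

theorem dwD_space {F : ℝ × S → ℝ} (hF : ContDiff ℝ (⊤ : ℕ∞) F) (t : ℝ) (x e : S) :
    fderiv ℝ (fun y => F (t, y)) x e = dwD (0, e) F (t, x) := by
  have h1 : HasFDerivAt F (fderiv ℝ F (t, x)) (t, x) :=
    (hF.differentiable (by simp) _).hasFDerivAt
  have h2 : HasFDerivAt (fun y : S => (t, y)) ((0 : S →L[ℝ] ℝ).prod (.id ℝ S)) x :=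
    (hasFDerivAt_const t x).prodMk (hasFDerivAt_id x)
  have h3 : HasFDerivAt (fun y => F (t, y)) _ x := h1.comp x h2
  rw [h3.fderiv]
  simp [dwD]

/-- Vanishing outside the ball of radius `R` on `[0,T]`. -/
def dwZ (T R : ℝ) (F : ℝ × S → ℝ) : Prop := ∀ t ∈ Set.Icc 0 T, ∀ x, R < ‖x‖ → F (t, x) = 0

theorem dwZ_D {T R : ℝ} (hT : 0 < T) (v : ℝ × S) {F : ℝ × S → ℝ} (hF : ContDiff ℝ (⊤ : ℕ∞) F)
    (hZ : dwZ T R F) : dwZ T R (dwD v F) := by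
  intro t ht x hx
  have hc : Continuous fun s => dwD v F (s, x) :=
    (dwD_smooth v hF).continuous.comp (by fun_prop)
  have h0 : ∀ s ∈ Set.Ioo 0 T, dwD v F (s, x) = 0 := by
    intro s hs
    have : F =ᶠ[nhds (s, x)] fun _ => 0 := by
      have ho : IsOpen (Set.Ioo 0 T ×ˢ {y : S | R < ‖y‖}) :=
        isOpen_Ioo.prod (isOpen_lt continuous_const continuous_norm)
      filter_upwards [ho.mem_nhds (x := (s, x)) ⟨hs, hx⟩] with p hp
      exact hZ p.1 (Set.Ioo_subset_Icc_self hp.1) p.2 hp.2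
    unfold dwD
    rw [this.fderiv_eq]
    simp
  have hcl : IsClosed {s | dwD v F (s, x) = 0} := isClosed_eq hc continuous_const
  have : Set.Icc 0 T ⊆ {s | dwD v F (s, x) = 0} := by
    rw [← closure_Ioo hT.ne]
    exact closure_minimal h0 hcl
  exact this ht

theorem dwZ_mul_left {T R : ℝ} {F : ℝ × S → ℝ} (hZ : dwZ T R F) (G : ℝ × S → ℝ) :
    dwZ T R (fun p => F p * G p) := by
  intro t ht x hx
  simp [hZ t ht x hx]

theorem dwZ_int [MeasurableSpace S] {T R : ℝ} {F : ℝ × S → ℝ} (hZ : dwZ T R F)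
    (μ : Measure S) {t : ℝ} (ht : t ∈ Set.Icc 0 T) :
    ∫ x, F (t, x) ∂μ = ∫ x in Metric.closedBall 0 R, F (t, x) ∂μ := by
  rw [setIntegral_eq_integral_of_forall_compl_eq_zero]
  intro x hx
  exact hZ t ht x (by simpa using hx)

theorem dwZ_integrable [MeasurableSpace S] [BorelSpace S] [ProperSpace S]
    {T R : ℝ} {F : ℝ × S → ℝ} (hZ : dwZ T R F)
    (hc : Continuous F)
    (μ : Measure S) [IsFiniteMeasureOnCompacts μ] {t : ℝ} (ht : t ∈ Set.Icc 0 T) :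
    Integrable (fun x => F (t, x)) μ := by
  apply Continuous.integrable_of_hasCompactSupport (by fun_prop)
  apply HasCompactSupport.intro (isCompact_closedBall (0:S) R)
  intro x hx
  exact hZ t ht x (by simpa using hx)

theorem dw_ibp [MeasurableSpace S] [BorelSpace S] [FiniteDimensional ℝ S]
    {T R : ℝ} (hT : 0 < T) {F G : ℝ × S → ℝ} (hF : ContDiff ℝ (⊤ : ℕ∞) F)
    (hG : ContDiff ℝ (⊤ : ℕ∞) G) (zF : dwZ T R F)
    (μ : Measure S) [μ.IsAddHaarMeasure] {t : ℝ} (ht : t ∈ Set.Icc 0 T) (e : S) :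
    ∫ x in Metric.closedBall 0 R, F (t, x) * dwD (0, e) G (t, x) ∂μ =
      - ∫ x in Metric.closedBall 0 R, dwD (0, e) F (t, x) * G (t, x) ∂μ := by
  have : ProperSpace S := FiniteDimensional.proper ℝ S
  have zDF := dwZ_D hT (0, e) hF zF
  have cF := hF.continuous
  have cG := hG.continuous
  have cDF := (dwD_smooth (0, e) hF).continuous
  have cDG := (dwD_smooth (0, e) hG).continuous
  rw [← dwZ_int (dwZ_mul_left zF (dwD (0, e) G)) μ ht, ← dwZ_int (dwZ_mul_left zDF G) μ ht]
  have i1 := dwZ_integrable (dwZ_mul_left zDF G) (by fun_prop) μ ht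
  have i2 := dwZ_integrable (dwZ_mul_left zF (dwD (0, e) G)) (by fun_prop) μ ht
  have i3 := dwZ_integrable (dwZ_mul_left zF G) (by fun_prop) μ ht
  have dF : Differentiable ℝ (fun y => F (t, y)) :=
    (hF.differentiable (by simp)).comp (by fun_prop)
  have dG : Differentiable ℝ (fun y => G (t, y)) :=
    (hG.differentiable (by simp)).comp (by fun_prop)
  simp only [← dwD_space hF, ← dwD_space hG] at i1 i2 ⊢
  exact integral_mul_fderiv_eq_neg_fderiv_mul_of_integrable i1 i2 i3
    (fun x _ => dF x) (fun x _ => dG x)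
end

theorem dw_grad {n : ℕ} (f : EuclideanSpace ℝ (Fin n) → ℝ) (x : EuclideanSpace ℝ (Fin n)) :
    ‖gradient f x‖ ^ 2 = ∑ i, (fderiv ℝ f x (EuclideanSpace.single i 1)) ^ 2 := by
  rw [← (EuclideanSpace.basisFun (Fin n) ℝ).sum_sq_norm_inner_left]
  refine Finset.sum_congr rfl fun i _ => ?_
  rw [gradient, InnerProductSpace.toDual_symm_apply]
  simp

theorem dw_lap {n : ℕ} {F : ℝ × EuclideanSpace ℝ (Fin n) → ℝ} (hF : ContDiff ℝ (⊤ : ℕ∞) F)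
    (t : ℝ) (x : EuclideanSpace ℝ (Fin n)) :
    lap (fun y => F (t, y)) x =
      ∑ i, dwD (0, EuclideanSpace.single i 1) (dwD (0, EuclideanSpace.single i 1) F) (t, x) := by
  unfold lap
  refine Finset.sum_congr rfl fun i _ => ?_
  rw [iteratedFDeriv_two_apply, ← dwD_space (dwD_smooth _ hF)]
  simp only [← dwD_space hF]
  have hf : ContDiff ℝ (⊤ : ℕ∞) (fun y => F (t, y)) := hF.comp (by fun_prop)
  have hd : DifferentiableAt ℝ (fderiv ℝ (fun y => F (t, y))) x :=
      (hf.fderiv_right (m := (⊤ : ℕ∞)) (by simp)).differentiable (by simp) x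
  rw [fderiv_clm_apply hd (differentiableAt_const _)]
  simp

theorem damped_wave_key_decay_lemma (n : ℕ) (hn : 1 ≤ n)
    (V : EuclideanSpace ℝ (Fin n) → ℝ)
    (hVcont : Continuous V) (hVbdd : ∃ M, ∀ x, |V x| ≤ M)
    (hVnonneg : ∀ x, 0 ≤ V x)
    (u : ℝ → EuclideanSpace ℝ (Fin n) → ℝ)
    (u₀ u₁ : EuclideanSpace ℝ (Fin n) → ℝ)
    (hu : ContDiff ℝ (⊤ : ℕ∞) (fun p : ℝ × EuclideanSpace ℝ (Fin n) => u p.1 p.2))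
    (hu₀smooth : ContDiff ℝ (⊤ : ℕ∞) u₀) (hu₀supp : HasCompactSupport u₀)
    (hu₁smooth : ContDiff ℝ (⊤ : ℕ∞) u₁) (hu₁supp : HasCompactSupport u₁)
    (hPDE : ∀ t, 0 ≤ t → ∀ x,
      deriv (fun s => deriv (fun r => u r x) s) t - lap (u t) x + V x * u t x
        + deriv (fun s => u s x) t = 0)
    (hinit0 : ∀ x, u 0 x = u₀ x)
    (hinit1 : ∀ x, deriv (fun s => u s x) 0 = u₁ x)
    (hsupp : ∀ T, 0 < T → ∃ R, 0 < R ∧ ∀ t ∈ Set.Icc (0:ℝ) T, ∀ x,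
      R ≤ ‖x‖ → u t x = 0)
    :
    ∀ t, 0 ≤ t →
      ((1 + t) ^ 2 * energy V u t ≤
        9 * energy V u 0
          + 6 * (3 * energy V u 0 + (1/2) * (∫ x, (u₀ x) ^ 2) + ∫ x, u₁ x * u₀ x)
          + (∫ x, u₁ x * u₀ x) + ∫ s in (0:ℝ)..t, ∫ x, (u s x) ^ 2) ∧
      (((1 + t) / 4) * (∫ x, (u t x) ^ 2) ≤
        6 * energy V u 0
          + 5 * (3 * energy V u 0 + (1/2) * (∫ x, (u₀ x) ^ 2) + ∫ x, u₁ x * u₀ x)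
          + (∫ x, u₁ x * u₀ x) + ∫ s in (0:ℝ)..t, ∫ x, (u s x) ^ 2) := by
  intro T hT
  have hT1 : 0 < T + 1 := by linarith
  obtain ⟨R, hR, hsR⟩ := hsupp (T + 1) hT1
  set U : ℝ × EuclideanSpace ℝ (Fin n) → ℝ := fun p => u p.1 p.2 with hU
  set a := dwD (1, 0) U with ha
  set b : Fin n → ℝ × EuclideanSpace ℝ (Fin n) → ℝ :=
    fun i => dwD (0, EuclideanSpace.single i 1) U with hb
  set c := dwD (1, 0) a with hc
  have sa : ContDiff ℝ (⊤ : ℕ∞) a := dwD_smooth _ hu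
  have sb : ∀ i, ContDiff ℝ (⊤ : ℕ∞) (b i) := fun i => dwD_smooth _ hu
  have sc : ContDiff ℝ (⊤ : ℕ∞) c := dwD_smooth _ sa
  have cU := hu.continuous
  have ca := sa.continuous
  have cb := fun i => (sb i).continuous
  have cc := sc.continuous
  have cDa : ∀ i : Fin n, Continuous (dwD (0, EuclideanSpace.single i 1) a) :=
    fun i => (dwD_smooth _ sa).continuous
  have cDb : ∀ i : Fin n, Continuous (dwD (0, EuclideanSpace.single i 1) (b i)) :=
    fun i => (dwD_smooth _ (sb i)).continuous
  have zU : dwZ (T + 1) R U := fun s hs x hx => hsR s hs x hx.le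
  have za : dwZ (T + 1) R a := dwZ_D hT1 _ hu zU
  have zb : ∀ i, dwZ (T + 1) R (b i) := fun i => dwZ_D hT1 _ hu zU
  have dU : ∀ s x, HasDerivAt (fun r => U (r, x)) (a (s, x)) s := dwD_time hu
  have da : ∀ s x, HasDerivAt (fun r => a (r, x)) (c (s, x)) s := dwD_time sa
  have db : ∀ i s x, HasDerivAt (fun r => b i (r, x))
      (dwD (0, EuclideanSpace.single i 1) a (s, x)) s := by
    intro i s x
    have := dwD_time (sb i) s x
    rwa [hb, dwD_comm _ _ hu] at this
  have eut : ∀ s x, deriv (fun r => u r x) s = a (s, x) := fun s x => (dU s x).deriv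
  have egr : ∀ s x, ‖gradient (u s) x‖ ^ 2 = ∑ i, (b i (s, x)) ^ 2 := by
    intro s x
    rw [dw_grad]
    exact Finset.sum_congr rfl fun i _ => congrArg (· ^ 2) (dwD_space hu s x _)
  have pde : ∀ s, 0 ≤ s → ∀ x, c (s, x) = (∑ i, dwD (0, EuclideanSpace.single i 1) (b i) (s, x))
      - V x * U (s, x) - a (s, x) := by
    intro s hs x
    have h := hPDE s hs x
    have hl : lap (u s) x = ∑ i, dwD (0, EuclideanSpace.single i 1) (b i) (s, x) :=
      dw_lap hu s x
    have hcc : deriv (fun r => a (r, x)) s = c (s, x) := (da s x).deriv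
    simp only [eut, hl, hcc] at h
    have : U (s, x) = u s x := rfl
    rw [this]
    linarith
  set B := Metric.closedBall (0 : EuclideanSpace ℝ (Fin n)) R with hB
  have kB : IsCompact B := isCompact_closedBall _ _
  have hI : ∀ {G : ℝ × EuclideanSpace ℝ (Fin n) → ℝ}, Continuous G → ∀ s,
      Integrable (fun x => G (s, x)) (volume.restrict B) := by
    intro G hG s
    exact (by fun_prop : Continuous fun x => G (s, x)).continuousOn.integrableOn_compact kB
  have hP : ∀ {F : ℝ × EuclideanSpace ℝ (Fin n) → ℝ}, ContDiff ℝ (⊤ : ℕ∞) F →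
      dwZ (T + 1) R F → ∀ s ∈ Set.Icc 0 (T + 1),
      ∫ x in B, ∑ i, (F (s, x) * dwD (0, EuclideanSpace.single i 1) (b i) (s, x)
        + dwD (0, EuclideanSpace.single i 1) F (s, x) * b i (s, x)) = 0 := by
    intro F hF zF s hs
    have cF := hF.continuous
    have cDF : ∀ i : Fin n, Continuous (dwD (0, EuclideanSpace.single i 1) F) :=
      fun i => (dwD_smooth _ hF).continuous
    have j1 : ∀ i, Continuous fun p => F p * dwD (0, EuclideanSpace.single i 1) (b i) p :=
      fun i => cF.mul (cDb i)
    have j2 : ∀ i, Continuous fun p => dwD (0, EuclideanSpace.single i 1) F p * b i p :=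
      fun i => (cDF i).mul (cb i)
    have j3 : ∀ i, Continuous fun p => F p * dwD (0, EuclideanSpace.single i 1) (b i) p +
      dwD (0, EuclideanSpace.single i 1) F p * b i p := fun i => (j1 i).add (j2 i)
    rw [integral_finsetSum _ fun i _ => hI (j3 i) s]
    refine Finset.sum_eq_zero fun i _ => ?_
    rw [integral_add (hI (j1 i) s) (hI (j2 i) s), dw_ibp hT1 hF (sb i) zF volume hs]
    ring
  -- densities
  set e : ℝ × EuclideanSpace ℝ (Fin n) → ℝ :=
    fun p => a p ^ 2 + (∑ i, b i p ^ 2) + V p.2 * U p ^ 2 with he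
  have ce : Continuous e := by fun_prop
  have cK : Continuous fun p => a p ^ 2 := by fun_prop
  have cw : Continuous fun p => a p * U p := by fun_prop
  have cm : Continuous fun p => U p ^ 2 := by fun_prop
  have q1 : Continuous fun p => 2 * a p ^ 2 - e p := by fun_prop
  have q2 : Continuous fun p => 2 * a p ^ 2 - e p - a p * U p := by fun_prop
  have q3 : Continuous fun p => a p ^ 2 / 2 + U p ^ 2 / 2 := by fun_prop
  have q4 : Continuous fun p => a p ^ 2 + U p ^ 2 / 4 := by fun_prop
  have dE := dw_param volume B kB e
    (fun p => 2 * (-a p ^ 2 + a p * (c p + V p.2 * U p + a p)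
      + ∑ i, dwD (0, EuclideanSpace.single i 1) a p * b i p)) ce (by fun_prop) (by
      intro s x
      have h1 : HasDerivAt (fun r => ∑ i, b i (r, x) ^ 2)
          (∑ i, 2 * b i (s, x) * dwD (0, EuclideanSpace.single i 1) a (s, x)) s := by
        refine HasDerivAt.fun_sum fun i _ => ?_
        exact ((db i s x).pow 2).congr_deriv (by simp)
      refine ((((da s x).pow 2).add h1).add (((dU s x).pow 2).const_mul (V x))).congr_deriv ?_
      have h2 : (∑ i, 2 * b i (s, x) * dwD (0, EuclideanSpace.single i 1) a (s, x))
        = 2 * ∑ i, dwD (0, EuclideanSpace.single i 1) a (s, x) * b i (s, x) := by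
        rw [Finset.mul_sum]
        exact Finset.sum_congr rfl fun i _ => by ring
      rw [h2]
      simp
      ring)
  have dw := dw_param volume B kB (fun p => a p * U p)
    (fun p => c p * U p + a p * a p) cw (by fun_prop)
    (fun s x => (da s x).mul (dU s x))
  have dm := dw_param volume B kB (fun p => U p ^ 2)
    (fun p => 2 * (a p * U p)) cm (by fun_prop)
    (fun s x => ((dU s x).pow 2).congr_deriv (by simp; ring))
  have eK : ∀ s ∈ Set.Icc 0 T, (s ∈ Set.Icc 0 (T + 1)) := fun s hs => ⟨hs.1, by linarith [hs.2]⟩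
  have key := dw_ode (fun s => ∫ x in B, a (s, x) ^ 2) (fun s => (1/2) * ∫ x in B, e (s, x))
    (fun s => ∫ x in B, a (s, x) * U (s, x)) (fun s => ∫ x in B, U (s, x) ^ 2) T hT
    (continuous_const.mul (continuous_iff_continuousAt.2 fun s => (dE s).continuousAt))
    (continuous_iff_continuousAt.2 fun s => (dw s).continuousAt)
    (continuous_iff_continuousAt.2 fun s => (dm s).continuousAt)
    (by
      intro s hs
      have hs' := eK s (Set.Ioo_subset_Icc_self hs)
      refine ((dE s).const_mul (1/2)).congr_deriv ?_
      have h0 := hP sa za s hs'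
      have h1 : ∀ x, 2 * (-a (s, x) ^ 2 + a (s, x) * (c (s, x) + V x * U (s, x) + a (s, x))
          + ∑ i, dwD (0, EuclideanSpace.single i 1) a (s, x) * b i (s, x)) =
          (-2) * a (s, x) ^ 2 +
          2 * ∑ i, (a (s, x) * dwD (0, EuclideanSpace.single i 1) (b i) (s, x)
        + dwD (0, EuclideanSpace.single i 1) a (s, x) * b i (s, x)) := by
        intro x
        rw [pde s hs.1.le x, Finset.sum_add_distrib, ← Finset.mul_sum]
        ring
      simp only [h1]
      have j : Continuous fun p => ∑ i, (a p * dwD (0, EuclideanSpace.single i 1) (b i) p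
        + dwD (0, EuclideanSpace.single i 1) a p * b i p) := by fun_prop
      rw [integral_add ((hI cK s).const_mul _) ((hI j s).const_mul _), integral_const_mul,
        integral_const_mul, h0]
      ring)
    (by
      intro s hs
      have hs' := eK s (Set.Ioo_subset_Icc_self hs)
      refine (dw s).congr_deriv ?_
      have h0 := hP hu zU s hs'
      have h1 : ∀ x, c (s, x) * U (s, x) + a (s, x) * a (s, x) =
          (2 * a (s, x) ^ 2 - e (s, x) - a (s, x) * U (s, x)) +
          ∑ i, (U (s, x) * dwD (0, EuclideanSpace.single i 1) (b i) (s, x)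
        + dwD (0, EuclideanSpace.single i 1) U (s, x) * b i (s, x)) := by
        intro x
        have h2 : ∑ i, dwD (0, EuclideanSpace.single i 1) U (s, x) * b i (s, x)
          = ∑ i, b i (s, x) ^ 2 := Finset.sum_congr rfl fun i _ => by rw [sq]
        rw [pde s hs.1.le x, Finset.sum_add_distrib, ← Finset.mul_sum, h2, he]
        ring
      simp only [h1]
      have j : Continuous fun p => ∑ i, (U p * dwD (0, EuclideanSpace.single i 1) (b i) p
        + dwD (0, EuclideanSpace.single i 1) U p * b i p) :=
        continuous_finsetSum _ fun i _ => (cU.mul (cDb i)).add ((cb i).mul (cb i))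
      rw [integral_add (hI q2 s) (hI j s),
        integral_sub (hI q1 s) (hI cw s),
        integral_sub ((hI cK s).const_mul 2) (hI ce s), integral_const_mul, h0]
      ring)
    (by
      intro s hs
      refine (dm s).congr_deriv ?_
      rw [integral_const_mul])
    (fun s _ => integral_nonneg fun x => sq_nonneg _)
    (by
      intro s _
      have : ∫ x in B, a (s, x) ^ 2 ≤ ∫ x in B, e (s, x) := by
        refine integral_mono (hI cK s) (hI ce s) fun x => ?_
        have h1 : 0 ≤ ∑ i, b i (s, x) ^ 2 := Finset.sum_nonneg fun i _ => sq_nonneg _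
        have h2 := mul_nonneg (hVnonneg x) (sq_nonneg (U (s, x)))
        simp only [he]
        linarith
      linarith)
    (fun s _ => integral_nonneg fun x => sq_nonneg _)
    (by
      intro s _
      have h : 0 ≤ ∫ x in B, (a (s, x) ^ 2 / 2 + U (s, x) ^ 2 / 2 + a (s, x) * U (s, x)) :=
        integral_nonneg fun x => by
          have := sq_nonneg (a (s, x) + U (s, x))
          simp only [Pi.zero_apply]
          nlinarith
      rw [integral_add (hI q3 s) (hI cw s),
        integral_add ((hI cK s).div_const 2) ((hI cm s).div_const 2), integral_div,
        integral_div] at h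
      exact h)
    (by
      intro s _
      have h : 0 ≤ ∫ x in B, (a (s, x) ^ 2 + U (s, x) ^ 2 / 4 + a (s, x) * U (s, x)) :=
        integral_nonneg fun x => by
          have := sq_nonneg (a (s, x) + U (s, x) / 2)
          simp only [Pi.zero_apply]
          nlinarith
      rw [integral_add (hI q4 s) (hI cw s),
        integral_add (hI cK s) ((hI cm s).div_const 4), integral_div] at h
      exact h)
  -- transfer
  have ze : dwZ (T + 1) R e := by
    intro s hs x hx
    simp [he, za s hs x hx, zU s hs x hx, fun i => zb i s hs x hx]
  have zm : dwZ (T + 1) R (fun p => U p ^ 2) := by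
    intro s hs x hx
    simp [zU s hs x hx]
  have tE : ∀ s ∈ Set.Icc 0 T, energy V u s = (1/2) * ∫ x in B, e (s, x) := by
    intro s hs
    rw [← dwZ_int ze volume (eK s hs)]
    unfold energy
    simp only [eut, egr]
    rfl
  have tm : ∀ s ∈ Set.Icc 0 T, ∫ x, u s x ^ 2 = ∫ x in B, U (s, x) ^ 2 := fun s hs =>
    dwZ_int zm volume (eK s hs)
  have m0 : (0:ℝ) ∈ Set.Icc 0 T := ⟨le_rfl, hT⟩
  have mT : T ∈ Set.Icc 0 T := ⟨hT, le_rfl⟩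
  have tw : ∫ x, u₁ x * u₀ x = ∫ x in B, a (0, x) * U (0, x) := by
    rw [← dwZ_int (dwZ_mul_left za U) volume (eK 0 m0)]
    simp only [← hinit0, ← hinit1, eut]
    rfl
  have t0 : ∫ x, u₀ x ^ 2 = ∫ x in B, U (0, x) ^ 2 := by
    rw [← tm 0 m0]
    simp only [hinit0]
  have tJ : ∫ s in (0:ℝ)..T, ∫ x, u s x ^ 2 = ∫ s in (0:ℝ)..T, ∫ x in B, U (s, x) ^ 2 := by
    apply intervalIntegral.integral_congr
    intro s hs
    rw [Set.uIcc_of_le hT] at hs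
    exact tm s hs
  rw [tJ, tw, t0, tm T mT, tE T mT, tE 0 m0]
  exact key
end
end

section
/- Let n ≥ 1, let V : ℝⁿ → ℝ be bounded, continuous and satisfy V(x) > 0 for all x, and let u : [0,∞) × ℝⁿ → ℝ be a smooth solution of ∂ₜ²u − Δₓu + V·u + ∂ₜu = 0 with u(0,·) = u₀ ∈ Cc^∞(ℝⁿ), ∂ₜu(0,·) = u₁ ∈ Cc^∞(ℝⁿ), such that for every T > 0 there is R > 0 with u(t,·) supported in the ball of radius R for all t ∈ [0,T]. If ∫_{ℝⁿ} |u₁(x)+u₀(x)|²/V(x) dx < ∞, then for all t ≥ 0: ∫₀ᵗ ‖u(s,·)‖² ds ≤ ½‖u₀‖² + ∫_{ℝⁿ} |u₁(x)+u₀(x)|²/V(x) dx. -/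
open MeasureTheory

noncomputable section

section aux

variable {n : ℕ}

local notation "EE" n => EuclideanSpace ℝ (Fin n)

theorem aux_swap {t R : ℝ} (ht : 0 ≤ t) {H : ℝ → (EE n) → ℝ}
    (hH : Continuous (fun p : ℝ × (EE n) => H p.1 p.2))
    (h0 : ∀ s ∈ Set.Icc (0:ℝ) t, ∀ x, R ≤ ‖x‖ → H s x = 0) :
    ∫ s in (0:ℝ)..t, ∫ x, H s x = ∫ x, ∫ s in (0:ℝ)..t, H s x := by
  apply intervalIntegral_integral_swap
  rw [Set.uIoc_of_le ht]
  have h1 : IntegrableOn (Function.uncurry H) (Set.Icc (0:ℝ) t ×ˢ Metric.closedBall (0 : EE n) R)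
      (volume.prod volume) :=
    ContinuousOn.integrableOn_compact (isCompact_Icc.prod (isCompact_closedBall _ _))
      hH.continuousOn
  have h2 : IntegrableOn (Function.uncurry H) (Set.Ioc (0:ℝ) t ×ˢ (Set.univ : Set (EE n)))
      (volume.prod volume) := by
    apply h1.of_forall_sdiff_eq_zero (measurableSet_Ioc.prod MeasurableSet.univ)
    rintro ⟨s, x⟩ ⟨⟨hs, -⟩, h⟩
    have hs' : s ∈ Set.Icc (0:ℝ) t := Set.Ioc_subset_Icc_self hs
    apply h0 s hs'
    by_contra hx
    exact h ⟨hs', by simpa using (not_le.1 hx).le⟩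
  rw [IntegrableOn, ← Measure.prod_restrict, Measure.restrict_univ] at h2
  exact h2

theorem aux_integrable {R : ℝ} {f : (EE n) → ℝ} (hf : Continuous f)
    (h0 : ∀ x, R ≤ ‖x‖ → f x = 0) : Integrable f := by
  apply hf.integrable_of_hasCompactSupport
  apply HasCompactSupport.intro (isCompact_closedBall (0 : EE n) R)
  intro x hx
  apply h0
  simp at hx
  exact hx.le

theorem aux_fderiv_smooth {u : ℝ → (EE n) → ℝ} (e : EE n)
    (hu : ContDiff ℝ (⊤ : ℕ∞) (fun p : ℝ × (EE n) => u p.1 p.2)) :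
    ContDiff ℝ (⊤ : ℕ∞) (fun p : ℝ × (EE n) => fderiv ℝ (u p.1) p.2 e) := by
  apply ContDiff.fderiv_apply (f := fun (p : ℝ × (EE n)) y => u p.1 y) (m := (⊤ : ℕ∞))
  · exact hu.comp (by fun_prop : ContDiff ℝ (⊤ : ℕ∞)
      (fun q : (ℝ × (EE n)) × (EE n) => (q.1.1, q.2)))
  · fun_prop
  · fun_prop
  · exact le_rfl

theorem aux_deriv_smooth {u : ℝ → (EE n) → ℝ}
    (hu : ContDiff ℝ (⊤ : ℕ∞) (fun p : ℝ × (EE n) => u p.1 p.2)) :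
    ContDiff ℝ (⊤ : ℕ∞) (fun p : ℝ × (EE n) => deriv (fun s => u s p.2) p.1) := by
  simp only [← fderiv_apply_one_eq_deriv]
  apply ContDiff.fderiv_apply (f := fun (p : ℝ × (EE n)) s => u s p.2) (m := (⊤ : ℕ∞))
  · exact hu.comp (by fun_prop : ContDiff ℝ (⊤ : ℕ∞)
      (fun q : (ℝ × (EE n)) × ℝ => (q.2, q.1.2)))
  · fun_prop
  · fun_prop
  · exact le_rfl

theorem aux_prim {h : ℝ → (EE n) → ℝ}
    (hh : Continuous (fun p : ℝ × (EE n) => h p.1 p.2)) :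
    Continuous (fun p : ℝ × (EE n) => ∫ r in (0:ℝ)..p.1, h r p.2) := by
  apply intervalIntegral.continuous_parametric_intervalIntegral_of_continuous
    (f := fun (p : ℝ × (EE n)) r => h r p.2)
  · exact hh.comp (by fun_prop : Continuous (fun q : (ℝ × (EE n)) × ℝ => (q.2, q.1.2)))
  · fun_prop

theorem aux_prim' {h : ℝ → (EE n) → ℝ}
    (hh : Continuous (fun p : ℝ × (EE n) => h p.1 p.2)) (t : ℝ) :
    Continuous (fun x : (EE n) => ∫ r in (0:ℝ)..t, h r x) :=
  (aux_prim hh).comp (by fun_prop : Continuous (fun x : (EE n) => (t, x)))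

/-- one-variable identity -/
theorem aux_sq {g : ℝ → ℝ} (hg : Continuous g) (t : ℝ) :
    ∫ s in (0:ℝ)..t, g s * ∫ r in (0:ℝ)..s, g r = (1/2) * (∫ r in (0:ℝ)..t, g r) ^ 2 := by
  have hd : ∀ s, HasDerivAt (fun s => ∫ r in (0:ℝ)..s, g r) (g s) s := fun s =>
    hg.integral_hasStrictDerivAt 0 s |>.hasDerivAt
  have hc : Continuous (fun s => ∫ r in (0:ℝ)..s, g r) :=
    continuous_iff_continuousAt.2 fun s => (hd s).continuousAt
  rw [intervalIntegral.integral_eq_sub_of_hasDerivAt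
    (f := fun s => (1/2) * (∫ r in (0:ℝ)..s, g r) ^ 2)]
  · simp
  · intro s _
    have := ((hd s).pow 2).const_mul (1/2)
    refine this.congr_deriv ?_
    push_cast; ring
  · exact (hg.mul hc).intervalIntegrable _ _

theorem aux_pair {t R : ℝ} (ht : 0 ≤ t) {u : ℝ → (EE n) → ℝ} (e : EE n)
    (hu : ContDiff ℝ (⊤ : ℕ∞) (fun p : ℝ × (EE n) => u p.1 p.2))
    (h0 : ∀ s ∈ Set.Icc (0:ℝ) t, ∀ x, R ≤ ‖x‖ → u s x = 0) :
    ∫ x, ∫ s in (0:ℝ)..t, u s x * ∫ r in (0:ℝ)..s,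
      fderiv ℝ (fun y => fderiv ℝ (u r) y e) x e ≤ 0 := by
  set g : ℝ → (EE n) → ℝ := fun s x => fderiv ℝ (u s) x e with hg
  set h : ℝ → (EE n) → ℝ := fun s x => fderiv ℝ (g s) x e with hh
  have gs : ContDiff ℝ (⊤ : ℕ∞) (fun p : ℝ × (EE n) => g p.1 p.2) := aux_fderiv_smooth e hu
  have hs : ContDiff ℝ (⊤ : ℕ∞) (fun p : ℝ × (EE n) => h p.1 p.2) := aux_fderiv_smooth e gs
  have uc := hu.continuous
  have gc := gs.continuous
  have hc := hs.continuous
  have slice : ∀ {f : ℝ → (EE n) → ℝ}, Continuous (fun p : ℝ × (EE n) => f p.1 p.2) →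
      ∀ s, Continuous (f s) := fun hf s => hf.comp (Continuous.prodMk_right s)
  have slice2 : ∀ {f : ℝ → (EE n) → ℝ}, Continuous (fun p : ℝ × (EE n) => f p.1 p.2) →
      ∀ x, Continuous (fun s => f s x) := fun hf x => hf.comp (Continuous.prodMk_left x)
  have g0 : ∀ s ∈ Set.Icc (0:ℝ) t, ∀ x, R + 1 ≤ ‖x‖ → g s x = 0 := by
    intro s hs x hx
    have : u s =ᶠ[nhds x] fun _ => 0 := by
      have : ∀ᶠ y in nhds x, R < ‖y‖ :=
        continuous_norm.continuousAt.eventually (lt_mem_nhds (by linarith))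
      filter_upwards [this] with y hy using h0 s hs y hy.le
    simp [hg, this.fderiv_eq]
  have ibp : ∀ s ∈ Set.Icc (0:ℝ) t, ∀ r ∈ Set.Icc (0:ℝ) t,
      ∫ x, u s x * h r x = - ∫ x, g s x * g r x := by
    intro s hs' r hr
    apply integral_mul_fderiv_eq_neg_fderiv_mul_of_integrable
    · exact aux_integrable (R := R + 1) ((slice gc s).mul (slice gc r))
        fun x hx => by rw [show fderiv ℝ (u s) x e = 0 from g0 s hs' x hx, zero_mul]
    · exact aux_integrable (R := R) ((slice uc s).mul (slice hc r))
        fun x hx => by rw [h0 s hs' x hx, zero_mul]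
    · exact aux_integrable (R := R) ((slice uc s).mul (slice gc r))
        fun x hx => by rw [h0 s hs' x hx, zero_mul]
    · intro x _
      exact ((hu.comp (contDiff_prodMk_right s)).differentiable (by simp)) x
    · intro x _
      exact ((gs.comp (contDiff_prodMk_right r)).differentiable (by simp)) x
  have e1 : ∫ x, ∫ s in (0:ℝ)..t, u s x * ∫ r in (0:ℝ)..s, h r x
      = ∫ s in (0:ℝ)..t, ∫ x, u s x * ∫ r in (0:ℝ)..s, h r x :=
    (aux_swap (R := R) ht (uc.mul (aux_prim hc))
      fun s hs x hx => by rw [h0 s hs x hx, zero_mul]).symm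
  have e2 : ∫ x, ∫ s in (0:ℝ)..t, g s x * ∫ r in (0:ℝ)..s, g r x
      = ∫ s in (0:ℝ)..t, ∫ x, g s x * ∫ r in (0:ℝ)..s, g r x :=
    (aux_swap (R := R + 1) ht (gc.mul (aux_prim gc))
      fun s hs x hx => by rw [g0 s hs x hx, zero_mul]).symm
  have e3 : ∀ s ∈ Set.uIcc (0:ℝ) t, ∫ x, u s x * ∫ r in (0:ℝ)..s, h r x
      = - ∫ x, g s x * ∫ r in (0:ℝ)..s, g r x := by
    intro s hs'
    rw [Set.uIcc_of_le ht] at hs'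
    simp_rw [← intervalIntegral.integral_const_mul]
    rw [← aux_swap (H := fun r x => u s x * h r x) (R := R) hs'.1,
      ← aux_swap (H := fun r x => g s x * g r x) (R := R + 1) hs'.1,
      ← intervalIntegral.integral_neg]
    · apply intervalIntegral.integral_congr
      intro r hr
      rw [Set.uIcc_of_le hs'.1] at hr
      exact ibp s hs' r ⟨hr.1, hr.2.trans hs'.2⟩
    · exact ((slice gc s).comp continuous_snd).mul gc
    · intro r _ x hx
      rw [g0 s hs' x hx, zero_mul]
    · exact ((slice uc s).comp continuous_snd).mul hc
    · intro r _ x hx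
      rw [h0 s hs' x hx, zero_mul]
  change ∫ x, ∫ s in (0:ℝ)..t, u s x * ∫ r in (0:ℝ)..s, h r x ≤ 0
  rw [e1, intervalIntegral.integral_congr e3, intervalIntegral.integral_neg, ← e2]
  have : 0 ≤ ∫ x, ∫ s in (0:ℝ)..t, g s x * ∫ r in (0:ℝ)..s, g r x := by
    apply integral_nonneg
    intro x
    simp only [aux_sq (slice2 gc x), Pi.zero_apply]
    positivity
  linarith

theorem aux_lap {f : (EE n) → ℝ} (hf : ContDiff ℝ (⊤ : ℕ∞) f) (x : EE n) :
    lap f x = ∑ i : Fin n, fderiv ℝ (fun y => fderiv ℝ f y (EuclideanSpace.single i 1)) x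
      (EuclideanSpace.single i 1) := by
  unfold lap
  refine Finset.sum_congr rfl fun i _ => ?_
  rw [iteratedFDeriv_two_apply]
  have hd : DifferentiableAt ℝ (fderiv ℝ f) x :=
    ((hf.fderiv_right (m := 1) (by norm_cast)).differentiable (by simp)) x
  rw [fderiv_clm_apply hd (by fun_prop)]
  simp

end aux

theorem damped_wave_spacetime_L2_bound (n : ℕ) (hn : 1 ≤ n)
    (V : EuclideanSpace ℝ (Fin n) → ℝ)
    (hVcont : Continuous V) (hVbdd : ∃ M, ∀ x, |V x| ≤ M)
    (hVpos : ∀ x, 0 < V x)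
    (u : ℝ → EuclideanSpace ℝ (Fin n) → ℝ)
    (u₀ u₁ : EuclideanSpace ℝ (Fin n) → ℝ)
    (hu : ContDiff ℝ (⊤ : ℕ∞) (fun p : ℝ × EuclideanSpace ℝ (Fin n) => u p.1 p.2))
    (hu₀smooth : ContDiff ℝ (⊤ : ℕ∞) u₀) (hu₀supp : HasCompactSupport u₀)
    (hu₁smooth : ContDiff ℝ (⊤ : ℕ∞) u₁) (hu₁supp : HasCompactSupport u₁)
    (hPDE : ∀ t, 0 ≤ t → ∀ x,
      deriv (fun s => deriv (fun r => u r x) s) t - lap (u t) x + V x * u t x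
        + deriv (fun s => u s x) t = 0)
    (hinit0 : ∀ x, u 0 x = u₀ x)
    (hinit1 : ∀ x, deriv (fun s => u s x) 0 = u₁ x)
    (hsupp : ∀ T, 0 < T → ∃ R, 0 < R ∧ ∀ t ∈ Set.Icc (0:ℝ) T, ∀ x,
      R ≤ ‖x‖ → u t x = 0)
    (hK : Integrable (fun x => (u₁ x + u₀ x) ^ 2 / V x)) :
    ∀ t, 0 ≤ t →
      (∫ s in (0:ℝ)..t, ∫ x, (u s x) ^ 2) ≤
        (1/2) * (∫ x, (u₀ x) ^ 2) + ∫ x, (u₁ x + u₀ x) ^ 2 / V x := by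
  intro t ht
  obtain ⟨R, hR, hsup⟩ := hsupp (t + 1) (by linarith)
  have h0 : ∀ s ∈ Set.Icc (0:ℝ) t, ∀ x, R ≤ ‖x‖ → u s x = 0 := fun s hs x hx =>
    hsup s ⟨hs.1, by linarith [hs.2]⟩ x hx
  let e : Fin n → EuclideanSpace ℝ (Fin n) := fun i => EuclideanSpace.single i 1
  let h : Fin n → ℝ → EuclideanSpace ℝ (Fin n) → ℝ := fun i s x =>
    fderiv ℝ (fun y => fderiv ℝ (u s) y (e i)) x (e i)
  let D : ℝ → EuclideanSpace ℝ (Fin n) → ℝ := fun s x => deriv (fun r => u r x) s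
  let D2 : ℝ → EuclideanSpace ℝ (Fin n) → ℝ := fun s x => deriv (fun r => D r x) s
  have hs : ∀ i, ContDiff ℝ (⊤ : ℕ∞)
      (fun p : ℝ × EuclideanSpace ℝ (Fin n) => h i p.1 p.2) := fun i =>
    aux_fderiv_smooth (u := fun s y => fderiv ℝ (u s) y (e i)) (e i) (aux_fderiv_smooth (e i) hu)
  have hDs : ContDiff ℝ (⊤ : ℕ∞) (fun p : ℝ × EuclideanSpace ℝ (Fin n) => D p.1 p.2) :=
    aux_deriv_smooth hu
  have hD2s : ContDiff ℝ (⊤ : ℕ∞) (fun p : ℝ × EuclideanSpace ℝ (Fin n) => D2 p.1 p.2) :=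
    aux_deriv_smooth hDs
  have slice : ∀ {f : ℝ → EuclideanSpace ℝ (Fin n) → ℝ},
      Continuous (fun p : ℝ × EuclideanSpace ℝ (Fin n) => f p.1 p.2) →
      ∀ s, Continuous (f s) := fun hf s => hf.comp (Continuous.prodMk_right s)
  have slice2 : ∀ {f : ℝ → EuclideanSpace ℝ (Fin n) → ℝ},
      Continuous (fun p : ℝ × EuclideanSpace ℝ (Fin n) => f p.1 p.2) →
      ∀ x, Continuous (fun s => f s x) := fun hf x => hf.comp (Continuous.prodMk_left x)
  have uc := hu.continuous
  have hud : ∀ s x, HasDerivAt (fun s => u s x) (D s x) s := fun s x =>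
    (((hu.comp (contDiff_prodMk_left x)).differentiable (by simp)) s).hasDerivAt
  have hDd : ∀ s x, HasDerivAt (fun s => D s x) (D2 s x) s := fun s x =>
    (((hDs.comp (contDiff_prodMk_left x)).differentiable (by simp)) s).hasDerivAt
  have hlap : ∀ s x, lap (u s) x = ∑ i, h i s x := fun s x =>
    aux_lap (hu.comp (contDiff_prodMk_right s)) x
  let v : ℝ → EuclideanSpace ℝ (Fin n) → ℝ := fun s x => ∫ r in (0:ℝ)..s, u r x
  have hvd : ∀ s x, HasDerivAt (fun s => v s x) (u s x) s := fun s x =>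
    ((slice2 uc x).integral_hasStrictDerivAt 0 s).hasDerivAt
  let L : ℝ → EuclideanSpace ℝ (Fin n) → ℝ := fun s x => ∑ i, ∫ r in (0:ℝ)..s, h i r x
  have Lc : Continuous (fun p : ℝ × EuclideanSpace ℝ (Fin n) => L p.1 p.2) :=
    continuous_finsetSum _ fun i _ => aux_prim (hs i).continuous
  have vc : Continuous (fun p : ℝ × EuclideanSpace ℝ (Fin n) => v p.1 p.2) := aux_prim uc
  -- integrated equation
  have hint : ∀ s ∈ Set.Icc (0:ℝ) t, ∀ x,
      L s x = D s x + u s x + V x * v s x - (u₁ x + u₀ x) := by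
    intro s hs' x
    have e1 : L s x = ∫ r in (0:ℝ)..s, ∑ i, h i r x := by
      rw [intervalIntegral.integral_finsetSum]
      intro i _
      exact (slice2 (hs i).continuous x).intervalIntegrable _ _
    have e2 : ∫ r in (0:ℝ)..s, ∑ i, h i r x
        = ∫ r in (0:ℝ)..s, (D2 r x + D r x + V x * u r x) := by
      apply intervalIntegral.integral_congr
      intro r hr
      rw [Set.uIcc_of_le hs'.1] at hr
      have := hPDE r hr.1 x
      rw [hlap] at this
      change D2 r x - _ + _ + D r x = 0 at this
      simp only
      linarith
    rw [e1, e2, intervalIntegral.integral_eq_sub_of_hasDerivAt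
      (f := fun r => D r x + u r x + V x * v r x)]
    · have a1 : D 0 x = u₁ x := hinit1 x
      have a2 : v 0 x = 0 := intervalIntegral.integral_same
      simp only [a1, a2, hinit0]
      ring
    · intro r _
      exact ((hDd r x).add (hud r x)).add ((hvd r x).const_mul _)
    · exact (((slice2 hD2s.continuous x).add (slice2 hDs.continuous x)).add
        ((slice2 uc x).const_mul _)).intervalIntegrable _ _
  -- pointwise inequality
  have hpt : ∀ x, ∫ s in (0:ℝ)..t, (u s x) ^ 2 ≤
      (1/2) * (u₀ x) ^ 2 + (u₁ x + u₀ x) ^ 2 / V x + ∫ s in (0:ℝ)..t, u s x * L s x := by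
    intro x
    have c1 := slice2 uc x
    have c2 := slice2 hDs.continuous x
    have c3 := slice2 vc x
    have c4 := slice2 Lc x
    have e1 : ∫ s in (0:ℝ)..t, u s x * L s x = ∫ s in (0:ℝ)..t,
        ((u s x) ^ 2 + (u s x * D s x + V x * (v s x * u s x) - (u₁ x + u₀ x) * u s x)) := by
      apply intervalIntegral.integral_congr
      intro s hs'
      rw [Set.uIcc_of_le ht] at hs'
      simp only [hint s hs' x]
      ring
    have e2 : ∫ s in (0:ℝ)..t,
        (u s x * D s x + V x * (v s x * u s x) - (u₁ x + u₀ x) * u s x)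
        = ((1/2) * (u t x) ^ 2 + V x * ((1/2) * (v t x) ^ 2) - (u₁ x + u₀ x) * v t x)
          - (1/2) * (u₀ x) ^ 2 := by
      rw [intervalIntegral.integral_eq_sub_of_hasDerivAt
        (f := fun s => (1/2) * (u s x) ^ 2 + V x * ((1/2) * (v s x) ^ 2)
          - (u₁ x + u₀ x) * v s x)]
      · have a2 : v 0 x = 0 := intervalIntegral.integral_same
        simp only [a2, hinit0]
        ring
      · intro s _
        have := ((((hud s x).pow 2).const_mul (1/2)).add
          ((((hvd s x).pow 2).const_mul (1/2)).const_mul (V x))).sub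
          ((hvd s x).const_mul (u₁ x + u₀ x))
        refine this.congr_deriv ?_
        push_cast; ring
      · exact Continuous.intervalIntegrable (by fun_prop) _ _
    rw [intervalIntegral.integral_add (Continuous.intervalIntegrable (by fun_prop) _ _)
      (Continuous.intervalIntegrable (by fun_prop) _ _), e2] at e1
    have hV := hVpos x
    have key : (u₁ x + u₀ x) * v t x ≤ V x * ((1/2) * (v t x) ^ 2)
        + (u₁ x + u₀ x) ^ 2 / V x := by
      have q : V x * ((1/2) * (v t x) ^ 2) + (u₁ x + u₀ x) ^ 2 / V x
          - (u₁ x + u₀ x) * v t x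
          = (1/2) * ((V x * v t x - (u₁ x + u₀ x)) ^ 2 + (u₁ x + u₀ x) ^ 2) / V x := by
        field_simp
        ring
      have : 0 ≤ (1/2) * ((V x * v t x - (u₁ x + u₀ x)) ^ 2 + (u₁ x + u₀ x) ^ 2) / V x := by
        positivity
      linarith
    nlinarith [sq_nonneg (u t x)]
  have vanish : ∀ {F : ℝ → ℝ → ℝ} (x), (∀ s ∈ Set.Icc (0:ℝ) t, F s (u s x) = 0) →
      ∫ s in (0:ℝ)..t, F s (u s x) = 0 := by
    intro F x hF
    rw [intervalIntegral.integral_congr (g := fun _ => (0:ℝ))]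
    · simp
    · intro s hs'
      rw [Set.uIcc_of_le ht] at hs'
      exact hF s hs'
  have i1 : Integrable (fun x => ∫ s in (0:ℝ)..t, (u s x) ^ 2) := by
    apply aux_integrable (R := R) (aux_prim' (h := fun s x => (u s x) ^ 2) (uc.pow 2) t)
    intro x hx
    exact vanish (F := fun _ y => y ^ 2) x fun s hs' => by simp [h0 s hs' x hx]
  have i2 : Integrable (fun x => (1/2) * (u₀ x) ^ 2) := by
    apply aux_integrable (R := R) (by have := hu₀smooth.continuous; fun_prop)
    intro x hx
    rw [← hinit0, h0 0 ⟨le_rfl, ht⟩ x hx]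
    simp
  have i3 : ∀ i, Integrable (fun x => ∫ s in (0:ℝ)..t, u s x * ∫ r in (0:ℝ)..s, h i r x) := by
    intro i
    apply aux_integrable (R := R) (aux_prim' (h := fun s x => u s x * ∫ r in (0:ℝ)..s, h i r x)
      (uc.mul (aux_prim (hs i).continuous)) t)
    intro x hx
    exact vanish (F := fun s y => y * ∫ r in (0:ℝ)..s, h i r x) x
      fun s hs' => by simp [h0 s hs' x hx]
  have e4 : ∀ x, ∫ s in (0:ℝ)..t, u s x * L s x
      = ∑ i, ∫ s in (0:ℝ)..t, u s x * ∫ r in (0:ℝ)..s, h i r x := by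
    intro x
    rw [← intervalIntegral.integral_finsetSum]
    · simp only [L, Finset.mul_sum]
    · intro i _
      exact ((slice2 uc x).mul (slice2 (f := fun s x => ∫ r in (0:ℝ)..s, h i r x) (aux_prim (hs i).continuous) x)).intervalIntegrable _ _
  have i4 : Integrable (fun x => ∫ s in (0:ℝ)..t, u s x * L s x) := by
    simp only [e4]
    exact integrable_finsetSum _ fun i _ => i3 i
  have hneg : ∫ x, ∫ s in (0:ℝ)..t, u s x * L s x ≤ 0 := by
    simp only [e4]
    rw [integral_finsetSum _ fun i _ => i3 i]
    exact Finset.sum_nonpos fun i _ => aux_pair ht (e i) hu h0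
  rw [aux_swap (H := fun s x => (u s x) ^ 2) (R := R) ht (uc.pow 2)
    (fun s hs' x hx => by simp [h0 s hs' x hx])]
  have hfin := integral_mono i1 ((i2.add hK).add i4) hpt
  rw [integral_add' (i2.add hK) i4, integral_add' i2 hK, integral_const_mul] at hfin
  linarith
end
end

section
/- Let n ≥ 1, let V : ℝⁿ → ℝ be bounded, continuous and satisfy V(x) > 0 for all x, and let u : [0,∞) × ℝⁿ → ℝ be a smooth solution of the heat equation with potential ∂ₜu − Δₓu + V·u = 0 with u(0,·) = u₀, such that u(t,·) is Schwartz-class in x, uniformly on compact time intervals. If ∫_{ℝⁿ} |u₀(x)|²/V(x) dx < ∞ and v(t,x) := ∫₀ᵗ u(s,x) ds, then for all t > 0: ∫₀ᵗ ‖u(s,·)‖² ds + ¼∫_{ℝⁿ} V(x)|v(t,x)|² dx ≤ ∫_{ℝⁿ} |u₀(x)|²/V(x) dx. -/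
open MeasureTheory

noncomputable section

structure GoodFn {n : ℕ} (b : EuclideanSpace ℝ (Fin n) → ℝ) (T : ℝ)
    (g : ℝ → EuclideanSpace ℝ (Fin n) → ℝ) : Prop where
  cont : Continuous (fun p : ℝ × EuclideanSpace ℝ (Fin n) => g p.1 p.2)
  bd : ∃ C, 0 ≤ C ∧ ∀ s ∈ Set.Icc (0:ℝ) T, ∀ x, |g s x| ≤ C * b x

namespace GoodFn

variable {n : ℕ} {b : EuclideanSpace ℝ (Fin n) → ℝ} {T : ℝ}
  {g h : ℝ → EuclideanSpace ℝ (Fin n) → ℝ}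

theorem cont_t (hg : GoodFn b T g) (x : EuclideanSpace ℝ (Fin n)) : Continuous (fun s => g s x) :=
  hg.cont.comp (Continuous.prodMk_left x)

theorem cont_x (hg : GoodFn b T g) (s : ℝ) : Continuous (fun x => g s x) :=
  hg.cont.comp (Continuous.prodMk_right s)

theorem mono (hg : GoodFn b T g) {s : ℝ} (hs : s ≤ T) : GoodFn b s g := by
  obtain ⟨C, h0, hC⟩ := hg.bd
  exact ⟨hg.cont, C, h0, fun r hr x => hC r ⟨hr.1, hr.2.trans hs⟩ x⟩

theorem at_time (hg : GoodFn b T g) {s : ℝ} (hs : s ∈ Set.Icc (0:ℝ) T) (T' : ℝ) :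
    GoodFn b T' (fun _ x => g s x) := by
  obtain ⟨C, h0, hC⟩ := hg.bd
  exact ⟨(hg.cont_x s).comp continuous_snd, C, h0, fun r hr x => hC s hs x⟩

theorem mul (hb0 : ∀ x, 0 ≤ b x) (hb1 : ∀ x, b x ≤ 1) (hg : GoodFn b T g) (hh : GoodFn b T h) :
    GoodFn b T (fun s x => g s x * h s x) := by
  obtain ⟨C, h0, hC⟩ := hg.bd
  obtain ⟨D, h1, hD⟩ := hh.bd
  refine ⟨hg.cont.mul hh.cont, C * D, by positivity, fun s hs x => ?_⟩
  rw [abs_mul]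
  calc |g s x| * |h s x| ≤ (C * b x) * (D * 1) := by
        gcongr
        · exact mul_nonneg h0 (hb0 x)
        · exact hC s hs x
        · exact (hD s hs x).trans (by gcongr; exact hb1 x)
    _ = C * D * b x := by ring

theorem prim (hb0 : ∀ x, 0 ≤ b x) (hg : GoodFn b T g) (hT : 0 ≤ T) :
    GoodFn b T (fun s x => ∫ r in (0:ℝ)..s, g r x) := by
  obtain ⟨C, h0, hC⟩ := hg.bd
  refine ⟨?_, C * T, by positivity, fun s hs x => ?_⟩
  · exact intervalIntegral.continuous_parametric_intervalIntegral_of_continuous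
      (f := fun (p : ℝ × EuclideanSpace ℝ (Fin n)) (r : ℝ) => g r p.2)
      (hg.cont.comp (continuous_snd.prodMk (continuous_snd.comp continuous_fst))) continuous_fst
  · have := intervalIntegral.norm_integral_le_of_norm_le_const (a := (0:ℝ)) (b := s)
      (f := fun r => g r x) (C := C * b x) (fun r hr => by
        rw [Set.uIoc_of_le hs.1] at hr
        exact hC r ⟨hr.1.le, hr.2.trans hs.2⟩ x)
    rw [Real.norm_eq_abs] at this
    refine this.trans ?_
    rw [sub_zero, abs_of_nonneg hs.1]
    have : C * b x * s ≤ C * b x * T :=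
      mul_le_mul_of_nonneg_left hs.2 (mul_nonneg h0 (hb0 x))
    linarith

theorem integrable (hb : Integrable b) (hg : GoodFn b T g) {s : ℝ} (hs : s ∈ Set.Icc (0:ℝ) T) :
    Integrable (fun x => g s x) := by
  obtain ⟨C, h0, hC⟩ := hg.bd
  exact (hb.const_mul C).mono' (hg.cont_x s).aestronglyMeasurable
    (Filter.Eventually.of_forall fun x => hC s hs x)

theorem swap (hb : Integrable b) (hg : GoodFn b T g) (hT : 0 ≤ T) :
    ∫ x, ∫ s in (0:ℝ)..T, g s x = ∫ s in (0:ℝ)..T, ∫ x, g s x := by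
  obtain ⟨C, h0, hC⟩ := hg.bd
  simp only [intervalIntegral.integral_of_le hT]
  refine (integral_integral_swap (f := g) ?_).symm
  refine ((hb.const_mul C).comp_snd (volume.restrict (Set.Ioc 0 T))).mono'
    hg.cont.aestronglyMeasurable ?_
  have h1 : ∀ᵐ s ∂(volume.restrict (Set.Ioc (0:ℝ) T)), s ∈ Set.Ioc 0 T :=
    ae_restrict_mem measurableSet_Ioc
  have h2 := (Measure.quasiMeasurePreserving_fst (μ := volume.restrict (Set.Ioc (0:ℝ) T))
    (ν := (volume : Measure (EuclideanSpace ℝ (Fin n))))).ae h1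
  filter_upwards [h2] with p hp
  exact hC p.1 ⟨hp.1.le, hp.2⟩ p.2

end GoodFn

theorem half_sq (g : ℝ → ℝ) (hg : Continuous g) (t : ℝ) :
    ∫ s in (0:ℝ)..t, g s * ∫ r in (0:ℝ)..s, g r = (∫ r in (0:ℝ)..t, g r) ^ 2 / 2 := by
  have hd : ∀ s, HasDerivAt (fun s => ∫ r in (0:ℝ)..s, g r) (g s) s := fun s =>
    intervalIntegral.integral_hasDerivAt_right (hg.intervalIntegrable _ _)
      hg.aestronglyMeasurable.stronglyMeasurableAtFilter hg.continuousAt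
  have hc : Continuous (fun s => ∫ r in (0:ℝ)..s, g r) :=
    continuous_iff_continuousAt.2 fun s => (hd s).continuousAt
  rw [intervalIntegral.integral_eq_sub_of_hasDerivAt
    (f := fun s => (∫ r in (0:ℝ)..s, g r) ^ 2 / 2)]
  · simp
  · intro s _
    have := ((hd s).pow 2).div_const 2
    refine HasDerivAt.congr_deriv this ?_
    norm_num
    ring
  · exact (hg.mul hc).intervalIntegrable _ _

theorem ibp_neg {n : ℕ} {b : EuclideanSpace ℝ (Fin n) → ℝ} {T : ℝ}
    (hb : Integrable b) (hb0 : ∀ x, 0 ≤ b x) (hb1 : ∀ x, b x ≤ 1) (hT : 0 ≤ T)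
    (e : EuclideanSpace ℝ (Fin n))
    (u d : ℝ → EuclideanSpace ℝ (Fin n) → ℝ)
    (hd : ∀ s x, d s x = fderiv ℝ (u s) x e)
    (hud : ∀ s, Differentiable ℝ (u s)) (hdd : ∀ s, Differentiable ℝ (d s))
    (hu : GoodFn b T u) (hdg : GoodFn b T d)
    (hd2 : GoodFn b T (fun s x => fderiv ℝ (d s) x e)) :
    ∫ x, ∫ s in (0:ℝ)..T, u s x * ∫ r in (0:ℝ)..s, fderiv ℝ (d r) x e ≤ 0 := by
  have key : ∀ s ∈ Set.Icc (0:ℝ) T, ∫ x, u s x * ∫ r in (0:ℝ)..s, fderiv ℝ (d r) x e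
      = -∫ x, d s x * ∫ r in (0:ℝ)..s, d r x := by
    intro s hs
    have e1 := (GoodFn.mul hb0 hb1 (hu.at_time hs s) (hd2.mono hs.2)).swap hb hs.1
    have e2 := (GoodFn.mul hb0 hb1 (hdg.at_time hs s) (hdg.mono hs.2)).swap hb hs.1
    simp only [intervalIntegral.integral_const_mul] at e1 e2
    rw [e1, e2, ← intervalIntegral.integral_neg]
    refine intervalIntegral.integral_congr fun r hr => ?_
    rw [Set.uIcc_of_le hs.1] at hr
    have hr' : r ∈ Set.Icc (0:ℝ) T := ⟨hr.1, hr.2.trans hs.2⟩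
    have i1 : Integrable (fun x => d s x * d r x) :=
      (GoodFn.mul hb0 hb1 (hdg.at_time hs T) hdg).integrable hb hr'
    have i2 : Integrable (fun x => u s x * fderiv ℝ (d r) x e) :=
      (GoodFn.mul hb0 hb1 (hu.at_time hs T) hd2).integrable hb hr'
    have i3 : Integrable (fun x => u s x * d r x) :=
      (GoodFn.mul hb0 hb1 (hu.at_time hs T) hdg).integrable hb hr'
    have := integral_mul_fderiv_eq_neg_fderiv_mul_of_integrable (f := u s) (g := d r) (v := e)
      (μ := volume) (by simpa only [← hd] using i1) i2 i3 (fun x _ => hud s x) (fun x _ => hdd r x)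
    simpa only [← hd] using this
  have s1 := (GoodFn.mul hb0 hb1 hu (hd2.prim hb0 hT)).swap hb hT
  have s2 := (GoodFn.mul hb0 hb1 hdg (hdg.prim hb0 hT)).swap hb hT
  rw [s1]
  have : ∫ s in (0:ℝ)..T, ∫ x, u s x * ∫ r in (0:ℝ)..s, fderiv ℝ (d r) x e
      = ∫ s in (0:ℝ)..T, -∫ x, d s x * ∫ r in (0:ℝ)..s, d r x := by
    refine intervalIntegral.integral_congr fun r hr => ?_
    rw [Set.uIcc_of_le hT] at hr
    exact key r hr
  rw [this, intervalIntegral.integral_neg, ← s2, neg_nonpos]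
  refine integral_nonneg fun x => ?_
  show 0 ≤ ∫ s in (0:ℝ)..T, d s x * ∫ r in (0:ℝ)..s, d r x
  rw [half_sq _ (hdg.cont_t x)]
  positivity

theorem decay_aux {n : ℕ} (a C D : ℝ) (y : ℝ) (hy : 0 ≤ y) (ha : 0 ≤ a)
    (h0 : y ^ 0 * a ≤ C) (h1 : y ^ (n + 1) * a ≤ D) :
    a ≤ (2 ^ n * (C + D)) * (1 + y) ^ (-((n : ℝ) + 1)) := by
  have hp : (0:ℝ) < 1 + y := by linarith
  rw [Real.rpow_neg hp.le, ← div_eq_mul_inv]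
  have : (1 + y) ^ ((n:ℝ) + 1) = (1 + y) ^ (n + 1) := by
    rw [← Real.rpow_natCast]; push_cast; rfl
  rw [this, le_div_iff₀ (by positivity)]
  have h2 := add_pow_le (zero_le_one (α := ℝ)) hy (n + 1)
  simp only [one_pow, Nat.add_sub_cancel] at h2
  calc a * (1 + y) ^ (n + 1) ≤ a * (2 ^ n * (1 + y ^ (n + 1))) := by gcongr
    _ = 2 ^ n * (y ^ 0 * a + y ^ (n + 1) * a) := by ring
    _ ≤ _ := by gcongr

theorem heat_potential_primitive_estimate (n : ℕ) (hn : 1 ≤ n)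
    (V : EuclideanSpace ℝ (Fin n) → ℝ)
    (hVcont : Continuous V) (hVbdd : ∃ M, ∀ x, |V x| ≤ M)
    (hVpos : ∀ x, 0 < V x)
    (u : ℝ → EuclideanSpace ℝ (Fin n) → ℝ)
    (u₀ : EuclideanSpace ℝ (Fin n) → ℝ)
    (hu : ContDiff ℝ (⊤ : ℕ∞) (fun p : ℝ × EuclideanSpace ℝ (Fin n) => u p.1 p.2))
    (hPDE : ∀ t, 0 ≤ t → ∀ x,
      deriv (fun s => u s x) t - lap (u t) x + V x * u t x = 0)
    (hinit0 : ∀ x, u 0 x = u₀ x)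
    (hSch : ∀ (k m : ℕ) (T : ℝ), 0 < T → ∃ C, ∀ t ∈ Set.Icc (0:ℝ) T, ∀ x,
      ‖x‖ ^ k * ‖iteratedFDeriv ℝ m (u t) x‖ ≤ C)
    (hK : Integrable (fun x => (u₀ x) ^ 2 / V x))
    (v : ℝ → EuclideanSpace ℝ (Fin n) → ℝ)
    (hv : ∀ t x, v t x = ∫ s in (0:ℝ)..t, u s x) :
    ∀ t, 0 < t →
      (∫ s in (0:ℝ)..t, ∫ x, (u s x) ^ 2)
        + (1/4) * (∫ x, V x * (v t x) ^ 2)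
      ≤ ∫ x, (u₀ x) ^ 2 / V x := by
  intro t ht
  set b : EuclideanSpace ℝ (Fin n) → ℝ := fun x => (1 + ‖x‖) ^ (-((n : ℝ) + 1)) with hbdef
  have hb : Integrable b := integrable_one_add_norm (by simp)
  have hb0 : ∀ x, 0 ≤ b x := fun x => by positivity
  have hb1 : ∀ x, b x ≤ 1 := fun x =>
    Real.rpow_le_one_of_one_le_of_nonpos (by linarith [norm_nonneg x])
      (by have : (0:ℝ) ≤ n := Nat.cast_nonneg n
          linarith)
  -- decay of derivatives
  have hdec : ∀ m : ℕ, ∃ C, 0 ≤ C ∧ ∀ s ∈ Set.Icc (0:ℝ) t, ∀ x,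
      ‖iteratedFDeriv ℝ m (u s) x‖ ≤ C * b x := by
    intro m
    obtain ⟨C, hC⟩ := hSch 0 m t ht
    obtain ⟨D, hD⟩ := hSch (n + 1) m t ht
    have hC0 : 0 ≤ C := le_trans (by positivity) (hC 0 ⟨le_rfl, ht.le⟩ 0)
    have hD0 : 0 ≤ D := le_trans (by positivity) (hD 0 ⟨le_rfl, ht.le⟩ 0)
    exact ⟨2 ^ n * (C + D), by positivity, fun s hs x =>
      decay_aux _ C D ‖x‖ (norm_nonneg x) (norm_nonneg _) (hC s hs x) (hD s hs x)⟩
  let e : Fin n → EuclideanSpace ℝ (Fin n) := fun i => EuclideanSpace.single i 1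
  have he : ∀ i, ‖e i‖ = 1 := fun i => by simp [e]
  let d : Fin n → ℝ → EuclideanSpace ℝ (Fin n) → ℝ := fun i s x => fderiv ℝ (u s) x (e i)
  have hus : ∀ s, ContDiff ℝ (⊤ : ℕ∞) (u s) := fun s =>
    hu.comp (contDiff_const.prodMk contDiff_id)
  have hds : ∀ i, ContDiff ℝ (⊤ : ℕ∞) (fun p : ℝ × EuclideanSpace ℝ (Fin n) => d i p.1 p.2) :=
    fun i => ContDiff.fderiv_apply (m := (⊤ : ℕ∞))
      (f := fun (p : ℝ × EuclideanSpace ℝ (Fin n)) y => u p.1 y) (g := fun p => p.2)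
      (k := fun _ => e i)
      (hu.comp ((contDiff_fst.comp contDiff_fst).prodMk contDiff_snd)) contDiff_snd
      contDiff_const (by simp)
  have hd2s : ∀ i, ContDiff ℝ (⊤ : ℕ∞)
      (fun p : ℝ × EuclideanSpace ℝ (Fin n) => fderiv ℝ (d i p.1) p.2 (e i)) :=
    fun i => ContDiff.fderiv_apply (m := (⊤ : ℕ∞))
      (f := fun (p : ℝ × EuclideanSpace ℝ (Fin n)) y => d i p.1 y) (g := fun p => p.2)
      (k := fun _ => e i)
      ((hds i).comp ((contDiff_fst.comp contDiff_fst).prodMk contDiff_snd)) contDiff_snd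
      contDiff_const (by simp)
  have hd2eq : ∀ i s x, iteratedFDeriv ℝ 2 (u s) x ![e i, e i] = fderiv ℝ (d i s) x (e i) := by
    intro i s x
    rw [iteratedFDeriv_two_apply]
    have hdf : DifferentiableAt ℝ (fderiv ℝ (u s)) x :=
      ((hus s).fderiv_right (m := (⊤ : ℕ∞)) (by simp)).differentiable (by simp) x
    have : fderiv ℝ (d i s) x = (fderiv ℝ (fderiv ℝ (u s)) x).flip (e i) := by
      have := fderiv_clm_apply hdf (differentiableAt_const (e i))
      simpa using this
    rw [this]
    simp
  have gu : GoodFn b t u := by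
    obtain ⟨C, h0, hC⟩ := hdec 0
    exact ⟨hu.continuous, C, h0, fun s hs x => by simpa using hC s hs x⟩
  have gd : ∀ i, GoodFn b t (d i) := by
    intro i
    obtain ⟨C, h0, hC⟩ := hdec 1
    refine ⟨(hds i).continuous, C, h0, fun s hs x => ?_⟩
    have h1 := hC s hs x
    rw [norm_iteratedFDeriv_one] at h1
    have h2 := (fderiv ℝ (u s) x).le_opNorm (e i)
    rw [he, mul_one] at h2
    exact h2.trans h1
  have gd2 : ∀ i, GoodFn b t (fun s x => fderiv ℝ (d i s) x (e i)) := by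
    intro i
    obtain ⟨C, h0, hC⟩ := hdec 2
    refine ⟨(hd2s i).continuous, C, h0, fun s hs x => ?_⟩
    rw [← hd2eq]
    have h2 := (iteratedFDeriv ℝ 2 (u s) x).le_opNorm ![e i, e i]
    simp only [Fin.prod_univ_two, Matrix.cons_val_zero, Matrix.cons_val_one, he, mul_one] at h2
    exact h2.trans (hC s hs x)
  have hneg : ∀ i, ∫ x, ∫ s in (0:ℝ)..t, u s x * ∫ r in (0:ℝ)..s, fderiv ℝ (d i r) x (e i) ≤ 0 :=
    fun i => ibp_neg hb hb0 hb1 ht.le (e i) u (d i) (fun _ _ => rfl)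
      (fun s => (hus s).differentiable (by simp))
      (fun s => ((hds i).comp (contDiff_const.prodMk contDiff_id)).differentiable (by simp))
      gu (gd i) (gd2 i)
  have hlap : ∀ s x, lap (u s) x = ∑ i, fderiv ℝ (d i s) x (e i) := fun s x =>
    Finset.sum_congr rfl fun i _ => hd2eq i s x
  -- pointwise representation
  have hrep : ∀ s, 0 ≤ s → ∀ x, u s x = u₀ x
      + ∑ i, (∫ r in (0:ℝ)..s, fderiv ℝ (d i r) x (e i)) - V x * ∫ r in (0:ℝ)..s, u r x := by
    intro s hs x
    have hux : ContDiff ℝ (⊤ : ℕ∞) (fun r => u r x) :=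
      hu.comp (contDiff_id.prodMk contDiff_const)
    have hF : ∫ r in (0:ℝ)..s, (∑ i, fderiv ℝ (d i r) x (e i) - V x * u r x) = u s x - u 0 x := by
      refine intervalIntegral.integral_eq_sub_of_hasDerivAt (f := fun r => u r x) ?_ ?_
      · intro r hr
        rw [Set.uIcc_of_le hs] at hr
        have h1 := (hux.differentiable (by simp) r).hasDerivAt
        have h2 := hPDE r hr.1 x
        rw [hlap] at h2
        have h3 : ∑ i, fderiv ℝ (d i r) x (e i) - V x * u r x = deriv (fun r => u r x) r := by
          linarith
        rw [h3]
        exact h1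
      · exact ((continuous_finsetSum _ fun i _ => (gd2 i).cont_t x).sub
          (continuous_const.mul (gu.cont_t x))).intervalIntegrable _ _
    rw [intervalIntegral.integral_sub, intervalIntegral.integral_finsetSum,
      intervalIntegral.integral_const_mul, hinit0] at hF
    · linarith
    · exact fun i _ => ((gd2 i).cont_t x).intervalIntegrable _ _
    · exact (continuous_finsetSum _ fun i _ => (gd2 i).cont_t x).intervalIntegrable _ _
    · exact (continuous_const.mul (gu.cont_t x)).intervalIntegrable _ _
  have hpt : ∀ x, ∫ s in (0:ℝ)..t, u s x * u s x = u₀ x * v t x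
      + ∑ i, (∫ s in (0:ℝ)..t, u s x * ∫ r in (0:ℝ)..s, fderiv ℝ (d i r) x (e i))
      - V x * (v t x) ^ 2 / 2 := by
    intro x
    have c1 : Continuous (fun s => u s x * u₀ x) := (gu.cont_t x).mul continuous_const
    have c2 : ∀ i, Continuous (fun s => u s x * ∫ r in (0:ℝ)..s, fderiv ℝ (d i r) x (e i)) :=
      fun i => (gu.cont_t x).mul (((gd2 i).prim hb0 ht.le).cont_t x)
    have c3 : Continuous (fun s => V x * (u s x * ∫ r in (0:ℝ)..s, u r x)) :=
      continuous_const.mul ((gu.cont_t x).mul ((gu.prim hb0 ht.le).cont_t x))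
    have c4 := continuous_finsetSum Finset.univ (fun i _ => c2 i)
    have h1 : ∫ s in (0:ℝ)..t, u s x * u s x = ∫ s in (0:ℝ)..t, (u s x * u₀ x
        + ∑ i, (u s x * ∫ r in (0:ℝ)..s, fderiv ℝ (d i r) x (e i))
        - V x * (u s x * ∫ r in (0:ℝ)..s, u r x)) := by
      refine intervalIntegral.integral_congr fun s hs => ?_
      rw [Set.uIcc_of_le ht.le] at hs
      have := hrep s hs.1 x
      show u s x * u s x = _
      rw [← Finset.mul_sum]
      linear_combination u s x * this
    have c5 : Continuous (fun s => u s x * u₀ x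
        + ∑ i, (u s x * ∫ r in (0:ℝ)..s, fderiv ℝ (d i r) x (e i))) := c1.add c4
    rw [h1, intervalIntegral.integral_sub (c5.intervalIntegrable _ _)
      (c3.intervalIntegrable _ _), intervalIntegral.integral_add (c1.intervalIntegrable _ _)
      (c4.intervalIntegrable _ _), intervalIntegral.integral_finsetSum
      (fun i _ => (c2 i).intervalIntegrable _ _), intervalIntegral.integral_mul_const,
      intervalIntegral.integral_const_mul, half_sq _ (gu.cont_t x), hv]
    ring
  have htm : t ∈ Set.Icc (0:ℝ) t := ⟨ht.le, le_rfl⟩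
  have h0m : (0:ℝ) ∈ Set.Icc (0:ℝ) t := ⟨le_rfl, ht.le⟩
  have gv := gu.prim hb0 ht.le
  have i1 : Integrable (fun x => u₀ x * v t x) := by
    have := (GoodFn.mul hb0 hb1 (gu.at_time h0m t) gv).integrable hb htm
    simpa only [hinit0, ← hv] using this
  have i2 : ∀ i, Integrable
      (fun x => ∫ s in (0:ℝ)..t, u s x * ∫ r in (0:ℝ)..s, fderiv ℝ (d i r) x (e i)) := fun i =>
    ((GoodFn.mul hb0 hb1 gu ((gd2 i).prim hb0 ht.le)).prim hb0 ht.le).integrable hb htm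
  have i3 : Integrable (fun x => V x * (v t x) ^ 2) := by
    have := (GoodFn.mul hb0 hb1 gv gv).integrable hb htm
    simp only [← hv] at this
    obtain ⟨M, hM⟩ := hVbdd
    have h := this.bdd_mul (f := V) (c := M) hVcont.aestronglyMeasurable
      (Filter.Eventually.of_forall hM)
    simpa only [pow_two] using h
  have hsw := (GoodFn.mul hb0 hb1 gu gu).swap hb ht.le
  have hLHS : ∫ s in (0:ℝ)..t, ∫ x, (u s x) ^ 2 = ∫ x, ∫ s in (0:ℝ)..t, u s x * u s x := by
    rw [hsw]; simp only [pow_two]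
  have i4 := integrable_finsetSum Finset.univ (fun i _ => i2 i)
  rw [hLHS]
  simp only [hpt]
  have i5 : Integrable (fun x => u₀ x * v t x
      + ∑ i, (∫ s in (0:ℝ)..t, u s x * ∫ r in (0:ℝ)..s, fderiv ℝ (d i r) x (e i))) := i1.add i4
  rw [integral_sub i5 (i3.div_const 2), integral_add i1 i4,
    integral_finsetSum _ (fun i _ => i2 i), integral_div]
  have hs : ∑ i, ∫ x, ∫ s in (0:ℝ)..t, u s x * ∫ r in (0:ℝ)..s, fderiv ℝ (d i r) x (e i) ≤ 0 :=
    Finset.sum_nonpos fun i _ => hneg i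
  have hY : ∫ x, u₀ x * v t x ≤ ∫ x, ((u₀ x) ^ 2 / V x + (1/4) * (V x * (v t x) ^ 2)) := by
    refine integral_mono i1 (hK.add (i3.const_mul _)) fun x => ?_
    have hV := hVpos x
    have : (u₀ x) ^ 2 / V x + (1/4) * (V x * (v t x) ^ 2) - u₀ x * v t x
        = (u₀ x - V x * v t x / 2) ^ 2 / V x := by
      field_simp
      ring
    have h2 : 0 ≤ (u₀ x - V x * v t x / 2) ^ 2 / V x := by positivity
    show u₀ x * v t x ≤ (u₀ x) ^ 2 / V x + (1/4) * (V x * (v t x) ^ 2)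
    linarith
  rw [integral_add hK (i3.const_mul _), integral_const_mul] at hY
  linarith
end
end
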